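/- arXiv:2305.01792 — 2 statements merged into one kernel-verified Lean document; each statement's English description precedes it below -/
import Mathlib

section
/- Let θ ∈ (0, 1/2]. If U : T[θ, S₁] → T[θ, S₁] is a linear isometry, then there exist a sequence (ε_i)_{i=1}^∞ with values in {−1, 1} and a permutation π of {1, 2, …, ⌈θ⁻¹⌉} such that U e_i = ε_i e_{π(i)} for 1 ≤ i ≤ ⌈θ⁻¹⌉ and U e_i = ε_i e_i for i > ⌈θ⁻¹⌉. -/
open scoped BigOperators

noncomputable section

/-- Projection of a finitely supported vector onto the coordinates in `E`. -/
def tsProj (E : Finset ℕ+) (x : ℕ+ →₀ ℝ) : ℕ+ →₀ ℝ :=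
  x.filter fun i => i ∈ E

/-- The Schreier families `S_n` on the positive integers:
`S₁` consists of the sets `F` with `|F| ≤ min F` (together with `∅`), and `S_{n+1}`
consists of unions `F₁ ∪ ⋯ ∪ F_d` of nonempty members `F₁ < ⋯ < F_d` of `S_n`
with `d ≤ min F₁` (together with `∅`). -/
def Schreier : ℕ → Set (Finset ℕ+)
  | 0 => {F | F.card ≤ 1}
  | 1 => {F | ∀ a ∈ F, F.card ≤ (a : ℕ)}
  | n + 2 =>
      {F | F = ∅ ∨
        ∃ (d : ℕ) (G : Fin d → Finset ℕ+),
          0 < d ∧ (∀ i, G i ∈ Schreier (n + 1)) ∧ (∀ i, (G i).Nonempty) ∧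
          (∀ i j : Fin d, i < j → ∀ a ∈ G i, ∀ b ∈ G j, a < b) ∧
          (∀ i, ∀ a ∈ G i, d ≤ (a : ℕ)) ∧ F = Finset.univ.biUnion G}

/-- A tuple of nonempty finite sets `E 0 < E 1 < ⋯` whose set of minima belongs to `S`. -/
def TsAdmissible (S : Set (Finset ℕ+)) {d : ℕ} (E : Fin d → Finset ℕ+) : Prop :=
  (∀ i, (E i).Nonempty) ∧
  (∀ i j : Fin d, i < j → ∀ a ∈ E i, ∀ b ∈ E j, a < b) ∧
  ∃ μ : Fin d → ℕ+, (∀ i, IsLeast (↑(E i) : Set ℕ+) (μ i)) ∧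
    Finset.univ.image μ ∈ S

/-- The iterated norms `‖·‖_m` in the construction of the Tsirelson norm:
`‖x‖₀` is the supremum norm and
`‖x‖_{m+1} = max(‖x‖_m, sup{θ ∑ᵢ ‖Eᵢ x‖_m : E₁ < ⋯ < E_d, {min Eᵢ} ∈ S})`. -/
def tnormAux (θ : ℝ) (S : Set (Finset ℕ+)) : ℕ → (ℕ+ →₀ ℝ) → ℝ
  | 0, x => ⨆ i, |x i|
  | m + 1, x =>
      max (tnormAux θ S m x)
        (sSup {r : ℝ | ∃ (d : ℕ) (E : Fin d → Finset ℕ+), TsAdmissible S E ∧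
          r = θ * ∑ i, tnormAux θ S m (tsProj (E i) x)})

/-- The Tsirelson norm `‖x‖_{θ,S} = sup_m ‖x‖_m` on `c₀₀`. -/
def tnorm (θ : ℝ) (S : Set (Finset ℕ+)) (x : ℕ+ →₀ ℝ) : ℝ :=
  ⨆ m : ℕ, tnormAux θ S m x

/-- `X`, together with the sequence `e` of unit vectors, is (a realization of) the
Tsirelson space `T[θ, S_n]`: a Banach space containing `c₀₀` isometrically
(w.r.t. the Tsirelson norm) as a dense subspace, in which `(e i)` is a
(1-unconditional) basis, i.e. every `x` has a unique expansion `x = ∑ᵢ aᵢ eᵢ`. -/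
structure IsTsirelsonSpace (θ : ℝ) (n : ℕ) (X : Type*) [NormedAddCommGroup X]
    [NormedSpace ℝ X] (e : ℕ+ → X) : Prop where
  complete : CompleteSpace X
  norm_embed : ∀ a : ℕ+ →₀ ℝ, ‖a.sum fun i c => c • e i‖ = tnorm θ (Schreier n) a
  dense_embed : DenseRange fun a : ℕ+ →₀ ℝ => a.sum fun i c => c • e i
  expansion : ∀ x : X, ∃! a : ℕ+ → ℝ, HasSum (fun i => a i • e i) x

/-!
Expand the image `u i = U (e i)` of each basis vector as `∑ r, a i r • e r`; the matrix `a` is shown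
to be monomial.

* Convex combinations of basis vectors with tiny norm, obtained by repeated averaging of blocks,
  show that the basis is weakly null, hence so is `u`: every column of `a` tends to zero, and a
  gliding hump gives vectors `u (n k)` close to successive blocks `b k`.
* Let `i ≤ m < r` and `1 ≤ θ m`. On one hand `‖u i + ∑ k < m, u (n k)‖ ≤ θ m`, by an upper estimate
  for sums of `m + 1` basis vectors starting at or before `m`. On the other hand the singleton `{r}`
  followed by the supports of `m` blocks is admissible because `m + 1 ≤ r`, so the same norm is at
  least `θ (|a i r| + m)` up to a small error. Hence `a i r = 0`.
* On the span of the first `⌈θ⁻¹⌉` unit vectors the norm is the supremum norm, so for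
  `i ≤ ⌈θ⁻¹⌉` some entry of the row `a i` is `± 1`.
* Since `‖e i ± e j‖ ≤ 1`, an entry `± 1` forces all other entries of its column to vanish. So the
  first `⌈θ⁻¹⌉` rows form a signed permutation matrix, and the later rows are diagonal by induction.
-/

/-! ### Coordinate projections and the `ℓ₁`-norm -/

section Projections

lemma tsProj_apply (E : Finset ℕ+) (x : ℕ+ →₀ ℝ) (i : ℕ+) :
    tsProj E x i = if i ∈ E then x i else 0 :=
  Finsupp.filter_apply _ x i

lemma abs_tsProj_apply_le (E : Finset ℕ+) (x : ℕ+ →₀ ℝ) (i : ℕ+) : |tsProj E x i| ≤ |x i| := by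
  rw [tsProj_apply]
  split_ifs <;> simp

lemma tsProj_comm (E F : Finset ℕ+) (x : ℕ+ →₀ ℝ) :
    tsProj E (tsProj F x) = tsProj F (tsProj E x) := by
  ext i
  simp only [tsProj_apply]
  split_ifs <;> rfl

lemma tsProj_eq_zero_iff {E : Finset ℕ+} {x : ℕ+ →₀ ℝ} :
    tsProj E x = 0 ↔ ∀ i ∈ E, x i = 0 :=
  Finsupp.filter_eq_zero_iff _ _

lemma exists_mem_of_tsProj_ne_zero {E : Finset ℕ+} {x : ℕ+ →₀ ℝ} (h : tsProj E x ≠ 0) :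
    ∃ i ∈ E, x i ≠ 0 := by
  by_contra! hx
  exact h (tsProj_eq_zero_iff.2 hx)

lemma tsProj_add (E : Finset ℕ+) (x y : ℕ+ →₀ ℝ) :
    tsProj E (x + y) = tsProj E x + tsProj E y :=
  Finsupp.filter_add

lemma tsProj_smul (E : Finset ℕ+) (c : ℝ) (x : ℕ+ →₀ ℝ) :
    tsProj E (c • x) = c • tsProj E x :=
  Finsupp.filter_smul

/-- The coordinate projection `tsProj E` as a linear map. -/
def tsProjₗ (E : Finset ℕ+) : (ℕ+ →₀ ℝ) →ₗ[ℝ] ℕ+ →₀ ℝ where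
  toFun := tsProj E
  map_add' := tsProj_add E
  map_smul' := tsProj_smul E

/-- The vector of `c₀₀` that agrees with the sequence `a` on `E` and vanishes elsewhere. -/
def tsRestrict (a : ℕ+ → ℝ) (E : Finset ℕ+) : ℕ+ →₀ ℝ :=
  Finsupp.indicator E fun i _ => a i

lemma tsRestrict_apply (a : ℕ+ → ℝ) (E : Finset ℕ+) (i : ℕ+) :
    tsRestrict a E i = if i ∈ E then a i else 0 := by
  simp only [tsRestrict, Finsupp.indicator_apply, dite_eq_ite]

lemma support_tsRestrict_subset (a : ℕ+ → ℝ) (E : Finset ℕ+) : (tsRestrict a E).support ⊆ E :=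
  Finsupp.support_indicator_subset ..

lemma linearCombination_tsRestrict {V : Type*} [AddCommGroup V] [Module ℝ V] (e : ℕ+ → V)
    (a : ℕ+ → ℝ) (E : Finset ℕ+) :
    Finsupp.linearCombination ℝ e (tsRestrict a E) = ∑ i ∈ E, a i • e i := by
  rw [Finsupp.linearCombination_apply,
    Finsupp.sum_of_support_subset _ (support_tsRestrict_subset _ _) _ (by simp)]
  exact Finset.sum_congr rfl fun i hi => by rw [tsRestrict_apply, if_pos hi]

/-- The `ℓ₁`-norm on `c₀₀`. -/
def ellOne (x : ℕ+ →₀ ℝ) : ℝ := x.sum fun _ c => |c|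

lemma sum_abs_le_ellOne (x : ℕ+ →₀ ℝ) (s : Finset ℕ+) : ∑ i ∈ s, |x i| ≤ ellOne x := by
  rw [ellOne, Finsupp.sum, ← Finset.sum_filter_of_ne (p := (· ∈ x.support)) (by simp)]
  exact Finset.sum_le_sum_of_subset_of_nonneg (fun i hi => (Finset.mem_filter.1 hi).2)
    fun _ _ _ => abs_nonneg _

lemma abs_le_ellOne (x : ℕ+ →₀ ℝ) (i : ℕ+) : |x i| ≤ ellOne x := by
  simpa using sum_abs_le_ellOne x {i}

lemma ellOne_tsProj (E : Finset ℕ+) (x : ℕ+ →₀ ℝ) : ellOne (tsProj E x) = ∑ i ∈ E, |x i| := by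
  rw [ellOne, Finsupp.sum_of_support_subset (s := E) _ ?_ _ (by simp)]
  · exact Finset.sum_congr rfl fun i hi => by rw [tsProj_apply, if_pos hi]
  · intro i hi
    by_contra hiE
    simp [tsProj_apply, hiE] at hi

lemma ellOne_tsRestrict_one (G : Finset ℕ+) : ellOne (tsRestrict 1 G) = G.card := by
  rw [ellOne, Finsupp.sum_of_support_subset _ (support_tsRestrict_subset _ _) _ (by simp),
    Finset.sum_congr rfl fun i hi => by rw [tsRestrict_apply, if_pos hi, Pi.one_apply, abs_one]]
  simp

lemma ellOne_single (i : ℕ+) (c : ℝ) : ellOne (Finsupp.single i c) = |c| :=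
  Finsupp.sum_single_index abs_zero

lemma ellOne_add_le (x y : ℕ+ →₀ ℝ) : ellOne (x + y) ≤ ellOne x + ellOne y := by
  rw [ellOne, Finsupp.sum]
  calc ∑ i ∈ (x + y).support, |(x + y) i|
      ≤ ∑ i ∈ (x + y).support, |x i| + ∑ i ∈ (x + y).support, |y i| := by
        rw [← Finset.sum_add_distrib]
        exact Finset.sum_le_sum fun i _ => abs_add_le (x i) (y i)
    _ ≤ ellOne x + ellOne y := add_le_add (sum_abs_le_ellOne x _) (sum_abs_le_ellOne y _)

end Projections

/-! ### Successive and admissible families -/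

section Families

/-- The relation `E₁ < ⋯ < E_d` between finite sets, in the form used by `TsAdmissible`. -/
def TsSuccessive {d : ℕ} (E : Fin d → Finset ℕ+) : Prop :=
  ∀ i j : Fin d, i < j → ∀ a ∈ E i, ∀ b ∈ E j, a < b

variable {d : ℕ} {E : Fin d → Finset ℕ+}

lemma TsAdmissible.successive {S : Set (Finset ℕ+)} (hE : TsAdmissible S E) : TsSuccessive E :=
  hE.2.1

lemma TsSuccessive.eq_of_mem (hE : TsSuccessive E) {i j : Fin d} {a : ℕ+} (hi : a ∈ E i)
    (hj : a ∈ E j) : i = j := by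
  rcases lt_trichotomy i j with hij | hij | hij
  · exact absurd (hE i j hij a hi a hj) (lt_irrefl a)
  · exact hij
  · exact absurd (hE j i hij a hj a hi) (lt_irrefl a)

lemma TsSuccessive.sum_ellOne_le (hE : TsSuccessive E) (x : ℕ+ →₀ ℝ) :
    ∑ l, ellOne (tsProj (E l) x) ≤ ellOne x := by
  have hdisj : Set.PairwiseDisjoint ↑(Finset.univ : Finset (Fin d)) E := fun i _ j _ hij =>
    Finset.disjoint_left.2 fun a hi hj => hij (hE.eq_of_mem hi hj)
  simp_rw [ellOne_tsProj]
  rw [← Finset.sum_biUnion hdisj]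
  exact sum_abs_le_ellOne x _

lemma TsAdmissible.le_of_mem (hE : TsAdmissible (Schreier 1) E) {l : Fin d} {a : ℕ+}
    (ha : a ∈ E l) : d ≤ (a : ℕ) := by
  obtain ⟨-, hsucc, μ, hμ, hS⟩ := hE
  have hinj : Function.Injective μ := fun i j hij =>
    TsSuccessive.eq_of_mem hsucc (hμ i).1 (hij ▸ (hμ j).1)
  calc d = (Finset.univ.image μ).card := by
        rw [Finset.card_image_of_injective _ hinj, Finset.card_univ, Fintype.card_fin]
    _ ≤ (μ l : ℕ) := by
        rw [Schreier] at hS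
        exact hS (μ l) (Finset.mem_image_of_mem μ (Finset.mem_univ l))
    _ ≤ a := (hμ l).2 ha

lemma TsSuccessive.admissible (hE : TsSuccessive E) (hne : ∀ l, (E l).Nonempty)
    (hd : ∀ l, ∀ a ∈ E l, d ≤ (a : ℕ)) : TsAdmissible (Schreier 1) E := by
  refine ⟨hne, hE, fun l => (E l).min' (hne l), fun l => Finset.isLeast_min' (E l) (hne l), ?_⟩
  rw [Schreier]
  intro a ha
  obtain ⟨l, -, rfl⟩ := Finset.mem_image.1 ha
  exact Finset.card_image_le.trans (by simpa using hd l _ (Finset.min'_mem (E l) (hne l)))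

end Families

/-! ### The Tsirelson norm -/

section Norm

variable {θ : ℝ} {S : Set (Finset ℕ+)}

lemma tnormAux_mono (x : ℕ+ →₀ ℝ) : Monotone fun m => tnormAux θ S m x :=
  monotone_nat_of_le_succ fun _ => le_max_left _ _

lemma tnormAux_nonneg (m : ℕ) (x : ℕ+ →₀ ℝ) : 0 ≤ tnormAux θ S m x :=
  (Real.iSup_nonneg fun _ => abs_nonneg _).trans (tnormAux_mono x (Nat.zero_le m))

lemma tnormAux_succ_le {m : ℕ} {x : ℕ+ →₀ ℝ} {B : ℝ} (hB : tnormAux θ S m x ≤ B)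
    (hE : ∀ (d : ℕ) (E : Fin d → Finset ℕ+), TsAdmissible S E →
      θ * ∑ l, tnormAux θ S m (tsProj (E l) x) ≤ B) :
    tnormAux θ S (m + 1) x ≤ B := by
  refine max_le hB (Real.sSup_le ?_ ((tnormAux_nonneg m x).trans hB))
  rintro _ ⟨d, E, h, rfl⟩
  exact hE d E h

lemma tnormAux_le_ellOne (hθ : θ ∈ Set.Icc 0 1) (m : ℕ) (x : ℕ+ →₀ ℝ) :
    tnormAux θ S m x ≤ ellOne x := by
  induction m generalizing x with
  | zero => exact ciSup_le fun i => abs_le_ellOne x i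
  | succ m ih =>
    refine tnormAux_succ_le (ih x) fun d E hE => ?_
    calc θ * ∑ l, tnormAux θ S m (tsProj (E l) x)
        ≤ ∑ l, tnormAux θ S m (tsProj (E l) x) :=
          mul_le_of_le_one_left (Finset.sum_nonneg fun l _ => tnormAux_nonneg m _) hθ.2
      _ ≤ ∑ l, ellOne (tsProj (E l) x) := Finset.sum_le_sum fun l _ => ih _
      _ ≤ ellOne x := hE.successive.sum_ellOne_le x

lemma TsAdmissible.mul_sum_tnormAux_le (hθ : θ ∈ Set.Icc 0 1) {d : ℕ} {E : Fin d → Finset ℕ+}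
    (hE : TsAdmissible S E) (m : ℕ) (x : ℕ+ →₀ ℝ) :
    θ * ∑ l, tnormAux θ S m (tsProj (E l) x) ≤ tnormAux θ S (m + 1) x := by
  refine le_max_of_le_right (le_csSup ⟨θ * ellOne x, ?_⟩ ⟨d, E, hE, rfl⟩)
  rintro _ ⟨d', E', hE', rfl⟩
  exact mul_le_mul_of_nonneg_left ((Finset.sum_le_sum fun l _ => tnormAux_le_ellOne hθ m _).trans
    (hE'.successive.sum_ellOne_le x)) hθ.1

lemma abs_le_tnormAux_zero (x : ℕ+ →₀ ℝ) (i : ℕ+) : |x i| ≤ tnormAux θ S 0 x :=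
  le_ciSup (f := fun i => |x i|) ⟨ellOne x, by rintro _ ⟨j, rfl⟩; exact abs_le_ellOne x j⟩ i

lemma tnormAux_tsProj_le (hθ : θ ∈ Set.Icc 0 1) (F : Finset ℕ+) (m : ℕ) (x : ℕ+ →₀ ℝ) :
    tnormAux θ S m (tsProj F x) ≤ tnormAux θ S m x := by
  induction m generalizing x with
  | zero => exact ciSup_le fun i => (abs_tsProj_apply_le F x i).trans (abs_le_tnormAux_zero x i)
  | succ m ih =>
    refine tnormAux_succ_le ((ih x).trans (tnormAux_mono x m.le_succ)) fun d E hE => ?_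
    refine le_trans ?_ (hE.mul_sum_tnormAux_le hθ m x)
    simp_rw [tsProj_comm _ F]
    exact mul_le_mul_of_nonneg_left (Finset.sum_le_sum fun l _ => ih _) hθ.1

lemma tnormAux_add_le (hθ : θ ∈ Set.Icc 0 1) (m : ℕ) (x y : ℕ+ →₀ ℝ) :
    tnormAux θ S m (x + y) ≤ tnormAux θ S m x + tnormAux θ S m y := by
  induction m generalizing x y with
  | zero =>
    exact ciSup_le fun i => (abs_add_le (x i) (y i)).trans
      (add_le_add (abs_le_tnormAux_zero x i) (abs_le_tnormAux_zero y i))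
  | succ m ih =>
    refine tnormAux_succ_le ((ih x y).trans
      (add_le_add (tnormAux_mono x m.le_succ) (tnormAux_mono y m.le_succ))) fun d E hE => ?_
    calc θ * ∑ l, tnormAux θ S m (tsProj (E l) (x + y))
        ≤ θ * ∑ l, (tnormAux θ S m (tsProj (E l) x) + tnormAux θ S m (tsProj (E l) y)) := by
          refine mul_le_mul_of_nonneg_left (Finset.sum_le_sum fun l _ => ?_) hθ.1
          rw [tsProj_add]
          exact ih _ _
      _ ≤ tnormAux θ S (m + 1) x + tnormAux θ S (m + 1) y := by
          rw [Finset.sum_add_distrib, mul_add]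
          exact add_le_add (hE.mul_sum_tnormAux_le hθ m x) (hE.mul_sum_tnormAux_le hθ m y)

lemma tnormAux_smul_le (hθ : θ ∈ Set.Icc 0 1) (m : ℕ) (c : ℝ) (x : ℕ+ →₀ ℝ) :
    tnormAux θ S m (c • x) ≤ |c| * tnormAux θ S m x := by
  induction m generalizing x with
  | zero =>
    refine ciSup_le fun i => ?_
    rw [Finsupp.smul_apply, smul_eq_mul, abs_mul]
    exact mul_le_mul_of_nonneg_left (abs_le_tnormAux_zero x i) (abs_nonneg c)
  | succ m ih =>
    refine tnormAux_succ_le ((ih x).trans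
      (mul_le_mul_of_nonneg_left (tnormAux_mono x m.le_succ) (abs_nonneg c))) fun d E hE => ?_
    calc θ * ∑ l, tnormAux θ S m (tsProj (E l) (c • x))
        ≤ θ * ∑ l, |c| * tnormAux θ S m (tsProj (E l) x) := by
          refine mul_le_mul_of_nonneg_left (Finset.sum_le_sum fun l _ => ?_) hθ.1
          rw [tsProj_smul]
          exact ih _
      _ = |c| * (θ * ∑ l, tnormAux θ S m (tsProj (E l) x)) := by
          rw [← Finset.mul_sum, mul_left_comm]
      _ ≤ |c| * tnormAux θ S (m + 1) x :=
          mul_le_mul_of_nonneg_left (hE.mul_sum_tnormAux_le hθ m x) (abs_nonneg c)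

lemma tnormAux_le_tnorm (hθ : θ ∈ Set.Icc 0 1) (m : ℕ) (x : ℕ+ →₀ ℝ) :
    tnormAux θ S m x ≤ tnorm θ S x :=
  le_ciSup (f := fun m => tnormAux θ S m x)
    ⟨ellOne x, by rintro _ ⟨m, rfl⟩; exact tnormAux_le_ellOne hθ m x⟩ m

lemma tnorm_le_ellOne (hθ : θ ∈ Set.Icc 0 1) (x : ℕ+ →₀ ℝ) : tnorm θ S x ≤ ellOne x :=
  ciSup_le fun m => tnormAux_le_ellOne hθ m x

lemma abs_le_tnorm (hθ : θ ∈ Set.Icc 0 1) (x : ℕ+ →₀ ℝ) (i : ℕ+) : |x i| ≤ tnorm θ S x :=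
  (abs_le_tnormAux_zero x i).trans (tnormAux_le_tnorm hθ 0 x)

lemma tnorm_tsProj_le (hθ : θ ∈ Set.Icc 0 1) (F : Finset ℕ+) (x : ℕ+ →₀ ℝ) :
    tnorm θ S (tsProj F x) ≤ tnorm θ S x :=
  ciSup_le fun m => (tnormAux_tsProj_le hθ F m x).trans (tnormAux_le_tnorm hθ m x)

lemma tnorm_single (hθ : θ ∈ Set.Icc 0 1) (i : ℕ+) (c : ℝ) :
    tnorm θ S (Finsupp.single i c) = |c| := by
  refine le_antisymm ((tnorm_le_ellOne hθ _).trans_eq (ellOne_single i c)) ?_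
  simpa using abs_le_tnorm (S := S) hθ (Finsupp.single i c) i

lemma TsAdmissible.mul_sum_tnorm_le (hθ : θ ∈ Set.Icc 0 1) {d : ℕ} {E : Fin d → Finset ℕ+}
    (hE : TsAdmissible S E) (x : ℕ+ →₀ ℝ) :
    θ * ∑ l, tnorm θ S (tsProj (E l) x) ≤ tnorm θ S x := by
  have htendsto (y : ℕ+ →₀ ℝ) : Filter.Tendsto (fun m => tnormAux θ S m y) Filter.atTop
      (nhds (tnorm θ S y)) :=
    tendsto_atTop_ciSup (tnormAux_mono y)
      ⟨ellOne y, by rintro _ ⟨m, rfl⟩; exact tnormAux_le_ellOne hθ m y⟩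
  exact le_of_tendsto' ((tendsto_finsetSum Finset.univ fun l _ => htendsto _).const_mul θ)
    fun m => (hE.mul_sum_tnormAux_le hθ m x).trans (tnormAux_le_tnorm hθ (m + 1) x)

lemma tnorm_le (hθ : θ ∈ Set.Icc 0 1) {x : ℕ+ →₀ ℝ} {B : ℝ} (hsup : ∀ i, |x i| ≤ B)
    (hE : ∀ (d : ℕ) (E : Fin d → Finset ℕ+), TsAdmissible S E →
      θ * ∑ l, tnorm θ S (tsProj (E l) x) ≤ B) :
    tnorm θ S x ≤ B := by
  refine ciSup_le fun m => ?_
  induction m with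
  | zero => exact ciSup_le hsup
  | succ m ih =>
    refine tnormAux_succ_le ih fun d E h => le_trans ?_ (hE d E h)
    exact mul_le_mul_of_nonneg_left
      (Finset.sum_le_sum fun l _ => tnormAux_le_tnorm hθ m _) hθ.1

lemma tnorm_le_of_mul_ellOne_le (hθ : θ ∈ Set.Icc 0 1) {x : ℕ+ →₀ ℝ} {B : ℝ}
    (hsup : ∀ i, |x i| ≤ B) (hB : θ * ellOne x ≤ B) : tnorm θ S x ≤ B := by
  refine tnorm_le hθ hsup fun d E hE => le_trans ?_ hB
  exact mul_le_mul_of_nonneg_left ((Finset.sum_le_sum fun l _ => tnorm_le_ellOne hθ _).trans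
    (hE.successive.sum_ellOne_le x)) hθ.1

/-- The Tsirelson norm as a seminorm on `c₀₀`. -/
def tnormSeminorm (hθ : θ ∈ Set.Icc 0 1) (S : Set (Finset ℕ+)) : Seminorm ℝ (ℕ+ →₀ ℝ) :=
  Seminorm.ofSMulLE (tnorm θ S)
    (le_antisymm ((tnorm_le_ellOne hθ 0).trans_eq Finsupp.sum_zero_index)
      (by simpa using abs_le_tnorm (S := S) hθ 0 1))
    (fun x y => ciSup_le fun m => (tnormAux_add_le hθ m x y).trans
      (add_le_add (tnormAux_le_tnorm hθ m x) (tnormAux_le_tnorm hθ m y)))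
    (fun c x => ciSup_le fun m => (tnormAux_smul_le hθ m c x).trans
      (mul_le_mul_of_nonneg_left (tnormAux_le_tnorm hθ m x) (abs_nonneg c)))

lemma tnorm_zero (hθ : θ ∈ Set.Icc 0 1) : tnorm θ S 0 = 0 :=
  map_zero (tnormSeminorm hθ S)

end Norm

/-! ### Convex combinations of the unit vectors -/

section Convex

lemma seminorm_average_le {V : Type*} [AddCommGroup V] [Module ℝ V] (q : Seminorm ℝ V)
    {b : ℕ → V} {c : ℝ} {p B : ℕ} (hb : ∀ k, q (b k) ≤ 1) (hc : 0 ≤ c)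
    (hB : {k ∈ Finset.range p | c < q (b k)}.card ≤ B) :
    q ((p : ℝ)⁻¹ • ∑ k ∈ Finset.range p, b k) ≤ c + B / p := by
  have hterm (k : ℕ) : q (b k) ≤ c + if c < q (b k) then 1 else 0 := by
    split_ifs with h
    · linarith [hb k]
    · linarith
  have hsum : q (∑ k ∈ Finset.range p, b k) ≤ p * c + B := calc
    q (∑ k ∈ Finset.range p, b k) ≤ ∑ k ∈ Finset.range p, q (b k) :=
        Finset.le_sum_of_subadditive q (map_zero q).le (map_add_le_add q) _ b
    _ ≤ ∑ k ∈ Finset.range p, (c + if c < q (b k) then 1 else 0) :=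
        Finset.sum_le_sum fun k _ => hterm k
    _ = p * c + {k ∈ Finset.range p | c < q (b k)}.card := by
        rw [Finset.sum_add_distrib, Finset.sum_boole, Finset.sum_const, Finset.card_range,
          nsmul_eq_mul]
    _ ≤ p * c + B := by gcongr
  calc q ((p : ℝ)⁻¹ • ∑ k ∈ Finset.range p, b k)
      = (p : ℝ)⁻¹ * q (∑ k ∈ Finset.range p, b k) := by
        rw [map_smul_eq_mul, Real.norm_of_nonneg (by positivity)]
    _ ≤ (p : ℝ)⁻¹ * (p * c + B) := by gcongr
    _ = (p : ℝ)⁻¹ * p * c + B / p := by ring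
    _ ≤ c + B / p := by gcongr; exact mul_le_of_le_one_left hc inv_mul_le_one

/-- The set of convex combinations of the unit vectors `e_n` with `n ∈ s`. -/
def tsConvex (s : Set ℕ+) : Set (ℕ+ →₀ ℝ) :=
  convexHull ℝ ((fun n => Finsupp.single n 1) '' s)

lemma convex_tsConvex (s : Set ℕ+) : Convex ℝ (tsConvex s) := convex_convexHull ℝ _

lemma tsConvex_mono {s t : Set ℕ+} (h : s ⊆ t) : tsConvex s ⊆ tsConvex t :=
  convexHull_mono (Set.image_mono h)

lemma single_mem_tsConvex {s : Set ℕ+} {n : ℕ+} (hn : n ∈ s) :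
    Finsupp.single n 1 ∈ tsConvex s :=
  subset_convexHull ℝ _ (Set.mem_image_of_mem _ hn)

lemma tsConvex_subset {s : Set ℕ+} {C : Set (ℕ+ →₀ ℝ)} (hC : Convex ℝ C)
    (h : ∀ n ∈ s, Finsupp.single n 1 ∈ C) : tsConvex s ⊆ C :=
  convexHull_min (Set.image_subset_iff.2 h) hC

lemma average_mem_tsConvex {s : Set ℕ+} {b : ℕ → ℕ+ →₀ ℝ} (hb : ∀ k, b k ∈ tsConvex s) {p : ℕ}
    (hp : p ≠ 0) : (p : ℝ)⁻¹ • ∑ k ∈ Finset.range p, b k ∈ tsConvex s := by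
  rw [Finset.smul_sum]
  refine (convex_tsConvex s).sum_mem (fun _ _ => by positivity) ?_ fun k _ => hb k
  simp [hp]

lemma seminorm_le_one_of_mem_tsConvex {s : Set ℕ+} {x : ℕ+ →₀ ℝ} (hx : x ∈ tsConvex s)
    (q : Seminorm ℝ (ℕ+ →₀ ℝ)) (hq : ∀ n, q (Finsupp.single n 1) ≤ 1) : q x ≤ 1 :=
  (q.mem_closedBall_zero).1 <|
    tsConvex_subset (q.convex_closedBall 0 1) (fun n _ => (q.mem_closedBall_zero).2 (hq n)) hx

lemma mem_of_mem_tsConvex {s : Set ℕ+} {x : ℕ+ →₀ ℝ} (hx : x ∈ tsConvex s) {n : ℕ+}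
    (hn : x n ≠ 0) : n ∈ s := by
  by_contra hns
  have hker := tsConvex_subset (LinearMap.ker (Finsupp.lapply n : (ℕ+ →₀ ℝ) →ₗ[ℝ] ℝ)).convex
    (fun m (hm : m ∈ s) => by simp [ne_of_mem_of_not_mem hm hns]) hx
  exact hn hker

end Convex

/-! ### Block sequences -/

section Blocks

/-- A block sequence of `c₀₀` with cut points `K`: each `b k` is supported in the interval
`(K k, K (k + 1)]`. -/
structure IsBlockSequence (K : ℕ → ℕ+) (b : ℕ → ℕ+ →₀ ℝ) : Prop where
  strictMono : StrictMono K
  mem_Ioc : ∀ k n, b k n ≠ 0 → n ∈ Set.Ioc (K k) (K (k + 1))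

namespace IsBlockSequence

variable {K : ℕ → ℕ+} {b : ℕ → ℕ+ →₀ ℝ}

lemma lt_of_ne_zero (hb : IsBlockSequence K b) {j k : ℕ} (hjk : j < k) {n m : ℕ+}
    (hn : b j n ≠ 0) (hm : b k m ≠ 0) : n < m :=
  calc n ≤ K (j + 1) := (hb.mem_Ioc j n hn).2
    _ ≤ K k := hb.strictMono.monotone hjk
    _ < m := (hb.mem_Ioc k m hm).1

lemma eq_of_ne_zero (hb : IsBlockSequence K b) {j k : ℕ} {n : ℕ+} (hj : b j n ≠ 0)
    (hk : b k n ≠ 0) : j = k := by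
  rcases lt_trichotomy j k with h | h | h
  · exact absurd (hb.lt_of_ne_zero h hj hk) (lt_irrefl n)
  · exact h
  · exact absurd (hb.lt_of_ne_zero h hk hj) (lt_irrefl n)

-- Distinct blocks that are split by the family have distinct first pieces.
lemma card_split_le (hb : IsBlockSequence K b) {d : ℕ} {E : Fin d → Finset ℕ+}
    (hE : TsSuccessive E) {s : Finset ℕ}
    (hs : ∀ k ∈ s, ∃ l l', l < l' ∧ tsProj (E l) (b k) ≠ 0 ∧ tsProj (E l') (b k) ≠ 0) :
    s.card ≤ d := by
  have hnot_lt {j k : ℕ} {l l' : Fin d} (hl : l < l') (hj : tsProj (E l') (b j) ≠ 0)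
      (hk : tsProj (E l) (b k) ≠ 0) : ¬ j < k := fun hjk => by
    obtain ⟨n, hnE, hn⟩ := exists_mem_of_tsProj_ne_zero hj
    obtain ⟨m, hmE, hm⟩ := exists_mem_of_tsProj_ne_zero hk
    exact lt_asymm (hE l l' hl m hmE n hnE) (hb.lt_of_ne_zero hjk hn hm)
  have hcard := Finset.card_le_card_of_forall_subsingleton (s := s) (t := Finset.univ)
    (fun k l => ∃ l', l < l' ∧ tsProj (E l) (b k) ≠ 0 ∧ tsProj (E l') (b k) ≠ 0)
    (fun k hk => (hs k hk).imp fun l hl => ⟨Finset.mem_univ l, hl⟩) ?_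
  · simpa using hcard
  · rintro l - j ⟨-, l₁, hl₁, hj, hj₁⟩ k ⟨-, l₂, hl₂, hk, hk₂⟩
    exact le_antisymm (not_lt.1 (hnot_lt hl₂ hk₂ hj)) (not_lt.1 (hnot_lt hl₁ hj₁ hk))

end IsBlockSequence

lemma exists_strictMono_chain {α β : Type*} [Preorder α] {R : α → α → β → Prop}
    (h : ∀ K, ∃ K' a, K < K' ∧ R K K' a) (K₀ : α) :
    ∃ (K : ℕ → α) (a : ℕ → β), K 0 = K₀ ∧ StrictMono K ∧ ∀ k, R (K k) (K (k + 1)) (a k) := by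
  choose next a hlt hR using h
  refine ⟨fun k => next^[k] K₀, fun k => a (next^[k] K₀), rfl,
    strictMono_nat_of_lt_succ fun k => ?_, fun k => ?_⟩
  · rw [Function.iterate_succ_apply']
    exact hlt _
  · simpa only [Function.iterate_succ_apply'] using hR _

end Blocks

/-! ### Weak nullity of the basis -/

section WeaklyNull

variable {θ : ℝ} {S : Set (Finset ℕ+)} {A : Set ℕ+}

/-- The seminorm `x ↦ ‖E₁ x‖ + ⋯ + ‖E_d x‖` on `c₀₀`. -/
def tnormPieces (hθ : θ ∈ Set.Icc 0 1) (S : Set (Finset ℕ+)) {d : ℕ} (E : Fin d → Finset ℕ+) :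
    Seminorm ℝ (ℕ+ →₀ ℝ) :=
  ∑ l, (tnormSeminorm hθ S).comp (tsProjₗ (E l))

lemma tnormPieces_apply (hθ : θ ∈ Set.Icc 0 1) {d : ℕ} (E : Fin d → Finset ℕ+)
    (x : ℕ+ →₀ ℝ) : tnormPieces hθ S E x = ∑ l, tnorm θ S (tsProj (E l) x) := by
  rw [tnormPieces, sum_apply]
  rfl

lemma tnormPieces_single_le_one (hθ : θ ∈ Set.Icc 0 1) {d : ℕ} {E : Fin d → Finset ℕ+}
    (hE : TsSuccessive E) (n : ℕ+) : tnormPieces hθ S E (Finsupp.single n 1) ≤ 1 :=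
  calc tnormPieces hθ S E (Finsupp.single n 1)
      ≤ ∑ l, ellOne (tsProj (E l) (Finsupp.single n 1)) :=
        (tnormPieces_apply hθ E _).trans_le (Finset.sum_le_sum fun l _ => tnorm_le_ellOne hθ _)
    _ ≤ ellOne (Finsupp.single n 1) := hE.sum_ellOne_le _
    _ = 1 := by rw [ellOne_single, abs_one]

lemma exists_split_of_tnorm_lt (hθ : θ ∈ Set.Icc 0 1) {d : ℕ} {E : Fin d → Finset ℕ+}
    {x : ℕ+ →₀ ℝ} (h : tnorm θ S x < ∑ l, tnorm θ S (tsProj (E l) x)) :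
    ∃ l l', l < l' ∧ tsProj (E l) x ≠ 0 ∧ tsProj (E l') x ≠ 0 := by
  have hx : 0 ≤ tnorm θ S x := apply_nonneg (tnormSeminorm hθ S) x
  obtain ⟨l, -, hl⟩ := Finset.exists_ne_zero_of_sum_ne_zero (hx.trans_lt h).ne'
  have hl₀ : tsProj (E l) x ≠ 0 := fun h₀ => hl (by rw [h₀, tnorm_zero hθ])
  obtain ⟨l', hne, hl'⟩ : ∃ l', l' ≠ l ∧ tsProj (E l') x ≠ 0 := by
    by_contra! hzero
    rw [Finset.sum_eq_single l (fun l' _ hne => by rw [hzero l' hne, tnorm_zero hθ])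
      (fun hnot => absurd (Finset.mem_univ l) hnot)] at h
    exact h.not_ge (tnorm_tsProj_le hθ (E l) x)
  rcases hne.lt_or_gt with hlt | hlt
  · exact ⟨l', l, hlt, hl', hl₀⟩
  · exact ⟨l, l', hlt, hl₀, hl'⟩

/-- Arbitrarily far out there are convex combinations of the `e_n`, `n ∈ A`, satisfying `Q`. -/
def HasTailAverages (A : Set ℕ+) (Q : (ℕ+ →₀ ℝ) → Prop) : Prop :=
  ∀ K, ∃ a ∈ tsConvex (A ∩ Set.Ioi K), Q a

lemma HasTailAverages.mono {Q R : (ℕ+ →₀ ℝ) → Prop} (h : HasTailAverages A Q)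
    (hQR : ∀ a, Q a → R a) : HasTailAverages A R :=
  fun K => (h K).imp fun a ha => ⟨ha.1, hQR a ha.2⟩

lemma HasTailAverages.exists_blockSequence {Q : ℕ+ → (ℕ+ →₀ ℝ) → Prop}
    (h : ∀ D, HasTailAverages A (Q D)) (K₀ : ℕ+) :
    ∃ K b, IsBlockSequence K b ∧ ∀ k, b k ∈ tsConvex (A ∩ Set.Ioi K₀) ∧ Q (K k) (b k) := by
  have hstep (K : ℕ+) : ∃ (K' : ℕ+) (a : ℕ+ →₀ ℝ), K < K' ∧
      (a ∈ tsConvex (A ∩ Set.Ioi K) ∧ Q K a ∧ ∀ n, a n ≠ 0 → n ≤ K') := by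
    obtain ⟨a, ha, hQ⟩ := h K K
    obtain ⟨M, hM⟩ := a.support.bddAbove
    exact ⟨max (K + 1) M, a, lt_max_of_lt_left (PNat.lt_add_right K 1), ha, hQ,
      fun n hn => le_max_of_le_right (hM (Finsupp.mem_support_iff.2 hn))⟩
  obtain ⟨K, b, rfl, hmono, hb⟩ := exists_strictMono_chain hstep K₀
  refine ⟨K, b, ⟨hmono, fun k n hn => ⟨(mem_of_mem_tsConvex (hb k).1 hn).2, (hb k).2.2 n hn⟩⟩,
    fun k => ⟨tsConvex_mono ?_ (hb k).1, (hb k).2.1⟩⟩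
  gcongr
  exact hmono.monotone k.zero_le

-- In an average of many blocks of norm at most `c`, only a block split by the family `E` can have
-- pieces summing to more than `c`, and at most `d` blocks are split.
lemma HasTailAverages.sum_tnorm_le (hθ : θ ∈ Set.Icc 0 1) {c η : ℝ} (hc : 0 ≤ c) (hη : 0 < η)
    (h : HasTailAverages A fun a => tnorm θ S a ≤ c) (D : ℕ) :
    HasTailAverages A fun a => ∀ d ≤ D, ∀ E : Fin d → Finset ℕ+, TsSuccessive E →
      ∑ l, tnorm θ S (tsProj (E l) a) ≤ c + η := by
  intro K₀
  obtain ⟨K, b, hb, hbK⟩ := exists_blockSequence (fun _ => h) K₀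
  obtain ⟨p, hp, hpη⟩ : ∃ p : ℕ, p ≠ 0 ∧ D / p ≤ η := by
    obtain ⟨p, hp⟩ := exists_nat_gt (D / η)
    have hp₀ : 0 < (p : ℝ) := (by positivity : (0 : ℝ) ≤ D / η).trans_lt hp
    exact ⟨p, by exact_mod_cast hp₀.ne', (div_lt_comm₀ hη hp₀).1 hp |>.le⟩
  refine ⟨_, average_mem_tsConvex (fun k => (hbK k).1) hp, fun d hd E hE => ?_⟩
  rw [← tnormPieces_apply hθ]
  have hcard : {k ∈ Finset.range p | c < tnormPieces hθ S E (b k)}.card ≤ d := by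
    refine hb.card_split_le hE fun k hk => exists_split_of_tnorm_lt hθ (S := S) ?_
    rw [← tnormPieces_apply hθ]
    exact (hbK k).2.trans_lt (Finset.mem_filter.1 hk).2
  refine (seminorm_average_le _ (fun k => seminorm_le_one_of_mem_tsConvex (hbK k).1 _
    (tnormPieces_single_le_one hθ hE)) hc hcard).trans ?_
  have hdD : (d : ℝ) / p ≤ D / p := by gcongr
  linarith

-- If the family meets `b j` then `d ≤ K k` for all `k > j`, so only the first block it meets can
-- be large.
lemma IsBlockSequence.card_lt_tnormPieces_le_one (hθ : θ ∈ Set.Icc 0 1) {K : ℕ → ℕ+}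
    {b : ℕ → ℕ+ →₀ ℝ} (hb : IsBlockSequence K b) {d : ℕ} {E : Fin d → Finset ℕ+}
    (hE : TsAdmissible (Schreier 1) E) {c : ℝ} (hc : 0 ≤ c)
    (hsmall : ∀ k, d ≤ K k → tnormPieces hθ S E (b k) ≤ c) (s : Finset ℕ) :
    {k ∈ s | c < tnormPieces hθ S E (b k)}.card ≤ 1 := by
  have hnot_lt {j k : ℕ} (hj : c < tnormPieces hθ S E (b j))
      (hk : c < tnormPieces hθ S E (b k)) : ¬ j < k := fun hjk => by
    rw [tnormPieces_apply] at hj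
    obtain ⟨l, -, hl⟩ := Finset.exists_ne_zero_of_sum_ne_zero (hc.trans_lt hj).ne'
    obtain ⟨n, hnE, hn⟩ := exists_mem_of_tsProj_ne_zero (x := b j) (E := E l) fun h₀ =>
      hl (by rw [h₀, tnorm_zero hθ])
    have hnK : n ≤ K k := (hb.mem_Ioc j n hn).2.trans (hb.strictMono.monotone hjk)
    exact hk.not_ge (hsmall k ((hE.le_of_mem hnE).trans hnK))
  refine Finset.card_le_one.2 fun j hj k hk => ?_
  rw [Finset.mem_filter] at hj hk
  exact le_antisymm (not_lt.1 (hnot_lt hk.2 hj.2)) (not_lt.1 (hnot_lt hj.2 hk.2))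

lemma HasTailAverages.tnorm_le_mul (hθ : θ ∈ Set.Icc 0 1) {c η : ℝ} (hc : 0 ≤ c) (hη : 0 < η)
    (h : ∀ D : ℕ, HasTailAverages A fun a => ∀ d ≤ D, ∀ E : Fin d → Finset ℕ+,
      TsSuccessive E → ∑ l, tnorm θ (Schreier 1) (tsProj (E l) a) ≤ c) :
    HasTailAverages A fun a => tnorm θ (Schreier 1) a ≤ θ * c + η := by
  intro K₀
  obtain ⟨K, b, hb, hbK⟩ := exists_blockSequence (fun D : ℕ+ => h D) K₀
  obtain ⟨p, hpη⟩ := exists_nat_one_div_lt hη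
  have hp : ((1 : ℕ) : ℝ) / (p + 1 : ℕ) ≤ η := by push_cast; exact hpη.le
  refine ⟨_, average_mem_tsConvex (fun k => (hbK k).1) p.succ_ne_zero, tnorm_le hθ ?_ ?_⟩
  · intro i
    let q : Seminorm ℝ (ℕ+ →₀ ℝ) := (normSeminorm ℝ ℝ).comp (Finsupp.lapply i)
    have hcard : {k ∈ Finset.range (p + 1) | 0 < q (b k)}.card ≤ 1 :=
      Finset.card_le_one.2 fun j hj k hk => hb.eq_of_ne_zero
        (norm_pos_iff.1 (Finset.mem_filter.1 hj).2) (norm_pos_iff.1 (Finset.mem_filter.1 hk).2)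
    have hq : ∀ n, q (Finsupp.single n 1) ≤ 1 := fun n =>
      (abs_le_ellOne _ i).trans_eq ((ellOne_single n 1).trans abs_one)
    have hav := seminorm_average_le q
      (fun k => seminorm_le_one_of_mem_tsConvex (hbK k).1 q hq) le_rfl hcard
    have hθc := mul_nonneg hθ.1 hc
    exact hav.trans (by linarith)
  · intro d E hE
    rw [← tnormPieces_apply hθ]
    have hcard : {k ∈ Finset.range (p + 1) | c < tnormPieces hθ (Schreier 1) E (b k)}.card ≤ 1 :=
      hb.card_lt_tnormPieces_le_one hθ hE hc (fun k hk => by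
        rw [tnormPieces_apply]
        exact (hbK k).2 d hk E hE.successive) _
    have hav := seminorm_average_le _ (fun k => seminorm_le_one_of_mem_tsConvex (hbK k).1 _
      (tnormPieces_single_le_one hθ hE.successive)) hc hcard
    calc θ * tnormPieces hθ (Schreier 1) E _ ≤ θ * (c + η) :=
          mul_le_mul_of_nonneg_left (hav.trans (by linarith)) hθ.1
      _ ≤ θ * c + η := by rw [mul_add]; gcongr; exact mul_le_of_le_one_left hη.le hθ.2

lemma HasTailAverages.tnorm_le_contract (hθ : θ ∈ Set.Ico 0 1) {c : ℝ} (hc : 0 < c)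
    (h : HasTailAverages A fun a => tnorm θ (Schreier 1) a ≤ c) :
    HasTailAverages A fun a => tnorm θ (Schreier 1) a ≤ (1 + θ) / 2 * c := by
  have hθ' : θ ∈ Set.Icc 0 1 := Set.Ico_subset_Icc_self hθ
  have hη : 0 < (1 - θ) * c / 4 := by
    have := sub_pos.2 hθ.2
    positivity
  refine (tnorm_le_mul hθ' (by positivity) hη (sum_tnorm_le hθ' hc.le hη h)).mono fun a ha =>
    ha.trans ?_
  linear_combination mul_le_of_le_one_left hη.le hθ.2.le

lemma hasTailAverages_tnorm_le (hθ : θ ∈ Set.Ico 0 1) (hA : A.Infinite) {c : ℝ} (hc : 0 < c) :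
    HasTailAverages A fun a => tnorm θ (Schreier 1) a ≤ c := by
  have hpow (j : ℕ) : HasTailAverages A fun a => tnorm θ (Schreier 1) a ≤ ((1 + θ) / 2) ^ j := by
    induction j with
    | zero =>
      intro K
      obtain ⟨n, hnA, hKn⟩ := hA.exists_gt K
      exact ⟨_, single_mem_tsConvex ⟨hnA, hKn⟩,
        ((tnorm_single (Set.Ico_subset_Icc_self hθ) n 1).trans abs_one).le⟩
    | succ j ih =>
      rw [pow_succ']
      exact ih.tnorm_le_contract hθ (pow_pos (by linarith [hθ.1]) j)
  obtain ⟨j, hj⟩ := exists_pow_lt_of_lt_one hc (by linarith [hθ.2] : (1 + θ) / 2 < 1)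
  exact (hpow j).mono fun a ha => ha.trans hj.le

lemma finite_setOf_le_apply_single (hθ : θ ∈ Set.Ico 0 1) {C : ℝ} {f : (ℕ+ →₀ ℝ) →ₗ[ℝ] ℝ}
    (hf : ∀ a, |f a| ≤ C * tnorm θ (Schreier 1) a) {δ : ℝ} (hδ : 0 < δ) :
    {n | δ ≤ f (Finsupp.single n 1)}.Finite := by
  by_contra hinf
  obtain ⟨a, ha, hnorm⟩ := hasTailAverages_tnorm_le hθ hinf (c := δ / (|C| + 1)) (by positivity) 1
  have hδa : δ ≤ f a := tsConvex_subset (convex_halfSpace_ge f.isLinear δ) (fun n hn => hn.1) ha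
  have hCa : f a ≤ |C| * (δ / (|C| + 1)) := calc
    f a ≤ C * tnorm θ (Schreier 1) a := (le_abs_self _).trans (hf a)
    _ ≤ |C| * tnorm θ (Schreier 1) a := by
        gcongr
        · exact apply_nonneg (tnormSeminorm (Set.Ico_subset_Icc_self hθ) _) a
        · exact le_abs_self C
    _ ≤ |C| * (δ / (|C| + 1)) := by gcongr
  have hlt : |C| * (δ / (|C| + 1)) < δ := by
    rw [← mul_div_assoc, div_lt_iff₀ (by positivity)]
    linarith
  linarith

theorem tendsto_apply_single_cofinite (hθ : θ ∈ Set.Ico 0 1) {C : ℝ}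
    {f : (ℕ+ →₀ ℝ) →ₗ[ℝ] ℝ} (hf : ∀ a, |f a| ≤ C * tnorm θ (Schreier 1) a) :
    Filter.Tendsto (fun n => f (Finsupp.single n 1)) Filter.cofinite (nhds 0) := by
  refine Metric.tendsto_nhds.2 fun δ hδ => Filter.eventually_cofinite.2 ?_
  refine ((finite_setOf_le_apply_single hθ hf hδ).union
    (finite_setOf_le_apply_single (f := -f) hθ (by simpa using hf) hδ)).subset fun n hn => ?_
  simpa [le_abs] using hn

end WeaklyNull

/-! ### Norm estimates for `S₁` -/

section Estimates

variable {θ : ℝ} {S : Set (Finset ℕ+)}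

-- A family of length `d ≥ N` lives on `[N, ∞)`, where `x` has at most the coordinate `x N`.
lemma TsAdmissible.sum_tnormAux_le_abs (hθ : θ ∈ Set.Icc 0 1) {d : ℕ} {E : Fin d → Finset ℕ+}
    (hE : TsAdmissible (Schreier 1) E) {N : ℕ+} (hN : (N : ℕ) ≤ d) {x : ℕ+ →₀ ℝ}
    (hx : ∀ i, N < i → x i = 0) (m : ℕ) :
    ∑ l, tnormAux θ S m (tsProj (E l) x) ≤ |x N| := by
  have hpiece (l : Fin d) : tsProj (E l) x = tsProj (E l) (tsProj {N} x) := by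
    ext i
    simp only [tsProj_apply, Finset.mem_singleton]
    split_ifs with hi hiN
    · rfl
    · exact hx i (lt_of_le_of_ne (hN.trans (hE.le_of_mem hi)) (Ne.symm hiN))
    · rfl
  calc ∑ l, tnormAux θ S m (tsProj (E l) x)
      ≤ ∑ l, ellOne (tsProj (E l) (tsProj {N} x)) :=
        Finset.sum_le_sum fun l _ => (tnormAux_le_ellOne hθ m _).trans_eq (by rw [hpiece])
    _ ≤ ellOne (tsProj {N} x) := hE.successive.sum_ellOne_le _
    _ = |x N| := by rw [ellOne_tsProj, Finset.sum_singleton]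

lemma tnorm_le_of_forall_abs_le (hθ : θ ∈ Set.Icc 0 1) {N : ℕ+} (hN : θ * ((N : ℕ) - 1) ≤ 1)
    {x : ℕ+ →₀ ℝ} {B : ℝ} (hx : ∀ i, N < i → x i = 0) (hB : ∀ i, |x i| ≤ B) :
    tnorm θ (Schreier 1) x ≤ B := by
  refine ciSup_le fun m => ?_
  induction m generalizing x with
  | zero => exact ciSup_le hB
  | succ m ih =>
    have hB₀ : 0 ≤ B := (abs_nonneg _).trans (hB 1)
    refine tnormAux_succ_le (ih hx hB) fun d E hE => ?_
    rcases lt_or_ge d (N : ℕ) with hd | hd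
    · have hpiece (l : Fin d) : tnormAux θ (Schreier 1) m (tsProj (E l) x) ≤ B :=
        ih (fun i hi => by rw [tsProj_apply, hx i hi, ite_self])
          fun i => (abs_tsProj_apply_le (E l) x i).trans (hB i)
      have hd' : (d : ℝ) ≤ (N : ℕ) - 1 := le_sub_iff_add_le.2 (by exact_mod_cast hd)
      calc θ * ∑ l, tnormAux θ (Schreier 1) m (tsProj (E l) x) ≤ θ * (d * B) := by
            refine mul_le_mul_of_nonneg_left ?_ hθ.1
            simpa using Finset.sum_le_card_nsmul Finset.univ _ B fun l _ => hpiece l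
        _ ≤ θ * ((N : ℕ) - 1) * B := by
            rw [mul_assoc]
            exact mul_le_mul_of_nonneg_left (mul_le_mul_of_nonneg_right hd' hB₀) hθ.1
        _ ≤ B := mul_le_of_le_one_left hB₀ hN
    · exact (mul_le_of_le_one_left (Finset.sum_nonneg fun l _ => tnormAux_nonneg m _) hθ.2).trans
        ((hE.sum_tnormAux_le_abs hθ hd hx m).trans (hB N))

lemma Icc_zero_half_subset : Set.Icc 0 (1 / 2) ⊆ Set.Icc (0 : ℝ) 1 :=
  Set.Icc_subset_Icc_right (by norm_num)

lemma tnorm_le_ellOne_sub_one (hθ : θ ∈ Set.Icc 0 (1 / 2)) {x : ℕ+ →₀ ℝ} (hx : ∀ i, |x i| ≤ 1)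
    (h : 1 < tnorm θ S x) : tnorm θ S x ≤ ellOne x - 1 := by
  have hmul : 1 < θ * ellOne x := by
    by_contra! hle
    exact h.not_ge (tnorm_le_of_mul_ellOne_le (Icc_zero_half_subset hθ) hx hle)
  have hhalf : θ * ellOne x ≤ ellOne x / 2 := by
    have hx₀ : 0 ≤ ellOne x := (abs_nonneg _).trans (abs_le_ellOne x 1)
    linarith [mul_le_mul_of_nonneg_right hθ.2 hx₀]
  have hle : tnorm θ S x ≤ θ * ellOne x :=
    tnorm_le_of_mul_ellOne_le (Icc_zero_half_subset hθ) (fun i => (hx i).trans hmul.le) le_rfl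
  linarith

-- Either every piece has norm at most `1`, or some piece has norm at most its `ℓ₁`-norm minus `1`.
lemma TsSuccessive.sum_tnorm_le_max (hθ : θ ∈ Set.Icc 0 (1 / 2)) {d : ℕ}
    {E : Fin d → Finset ℕ+} (hE : TsSuccessive E) {x : ℕ+ →₀ ℝ} (hx : ∀ i, |x i| ≤ 1) :
    ∑ l, tnorm θ S (tsProj (E l) x) ≤ max (d : ℝ) (ellOne x - 1) := by
  by_cases hbig : ∃ l, 1 < tnorm θ S (tsProj (E l) x)
  · obtain ⟨l, hl⟩ := hbig
    have hloss := tnorm_le_ellOne_sub_one hθ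
      (fun i => (abs_tsProj_apply_le (E l) x i).trans (hx i)) hl
    have hrest := Finset.sum_le_sum fun l' (_ : l' ∈ Finset.univ.erase l) =>
      tnorm_le_ellOne (S := S) (Icc_zero_half_subset hθ) (tsProj (E l') x)
    have hsum := hE.sum_ellOne_le x
    rw [← Finset.add_sum_erase _ _ (Finset.mem_univ l)] at hsum ⊢
    exact le_max_of_le_right (by linarith)
  · push Not at hbig
    refine le_max_of_le_left ?_
    simpa using Finset.sum_le_card_nsmul Finset.univ _ 1 fun l _ => hbig l

-- A family meeting `i` has at most `m` pieces, and a family missing `i` sees only `m` coordinates.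
lemma tnorm_tsRestrict_one_le (hθ : θ ∈ Set.Icc 0 (1 / 2)) {G : Finset ℕ+} {i : ℕ+} (hi : i ∈ G)
    {m : ℕ} (hG : G.card = m + 1) (him : (i : ℕ) ≤ m) (hm : 1 ≤ θ * m) :
    tnorm θ (Schreier 1) (tsRestrict 1 G) ≤ θ * m := by
  have hθ' := Icc_zero_half_subset hθ
  have hG₁ (n : ℕ+) : |tsRestrict 1 G n| ≤ 1 := by
    rw [tsRestrict_apply]
    split_ifs <;> simp
  refine tnorm_le hθ' (fun n => (hG₁ n).trans hm) fun d E hE =>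
    mul_le_mul_of_nonneg_left ?_ hθ.1
  by_cases hmeet : ∃ l, i ∈ E l
  · obtain ⟨l, hl⟩ := hmeet
    have hdm : (d : ℝ) ≤ m := by exact_mod_cast (hE.le_of_mem hl).trans him
    refine (hE.successive.sum_tnorm_le_max hθ hG₁).trans (max_le hdm ?_)
    rw [ellOne_tsRestrict_one, hG, Nat.cast_add_one, add_sub_cancel_right]
  · have hpiece (l : Fin d) :
        tsProj (E l) (tsRestrict 1 G) = tsProj (E l) (tsRestrict 1 (G.erase i)) := by
      ext n
      have hn : n ∈ E l → n ≠ i := fun hnE hni => hmeet ⟨l, hni ▸ hnE⟩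
      simp only [tsProj_apply, tsRestrict_apply, Finset.mem_erase]
      grind
    calc ∑ l, tnorm θ (Schreier 1) (tsProj (E l) (tsRestrict 1 G))
        ≤ ∑ l, ellOne (tsProj (E l) (tsRestrict 1 (G.erase i))) :=
          Finset.sum_le_sum fun l _ => (tnorm_le_ellOne hθ' _).trans_eq (by rw [hpiece])
      _ ≤ ellOne (tsRestrict 1 (G.erase i)) := hE.successive.sum_ellOne_le _
      _ = m := by rw [ellOne_tsRestrict_one, Finset.card_erase_of_mem hi, hG, Nat.add_sub_cancel]

lemma tnorm_single_add_single_le (hθ : θ ∈ Set.Icc 0 (1 / 2)) {i j : ℕ+} (hij : i ≠ j)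
    {a b B : ℝ} (ha : |a| ≤ B) (hb : |b| ≤ B) :
    tnorm θ S (Finsupp.single i a + Finsupp.single j b) ≤ B := by
  have hB : 0 ≤ B := (abs_nonneg a).trans ha
  refine tnorm_le_of_mul_ellOne_le (Icc_zero_half_subset hθ) (fun k => ?_) ?_
  · rw [Finsupp.add_apply, Finsupp.single_apply, Finsupp.single_apply]
    grind
  · calc θ * ellOne (Finsupp.single i a + Finsupp.single j b) ≤ 1 / 2 * (B + B) := by
          refine mul_le_mul hθ.2 ?_ ((abs_nonneg _).trans (abs_le_ellOne _ i)) (by norm_num)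
          exact (ellOne_add_le _ _).trans (by simpa only [ellOne_single] using add_le_add ha hb)
      _ = B := by ring

lemma apply_single_eq_zero_of_abs_eq_one (hθ : θ ∈ Set.Icc 0 (1 / 2)) {f : (ℕ+ →₀ ℝ) →ₗ[ℝ] ℝ}
    (hf : ∀ a, |f a| ≤ tnorm θ S a) {i j : ℕ+} (hi : |f (Finsupp.single i 1)| = 1)
    (hij : i ≠ j) : f (Finsupp.single j 1) = 0 := by
  have hsum (s : ℝ) (hs : |s| ≤ 1) :
      |f (Finsupp.single i 1) + s * f (Finsupp.single j 1)| ≤ 1 := by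
    have h := (hf _).trans (tnorm_single_add_single_le (S := S) hθ hij abs_one.le hs)
    rwa [map_add, ← Finsupp.smul_single_one j s, map_smul, smul_eq_mul] at h
  have hplus := abs_le.1 (hsum 1 (by simp))
  have hminus := abs_le.1 (hsum (-1) (by simp))
  rcases eq_or_eq_neg_of_abs_eq hi with h | h <;> rw [h] at hplus hminus <;> linarith

lemma admissible_cons_Ioc {K : ℕ → ℕ+} (hK : StrictMono K) {r : ℕ+} (hr : r ≤ K 0) {m : ℕ}
    (hm : m < (r : ℕ)) :
    TsAdmissible (Schreier 1) (Fin.cons {r} fun k : Fin m => Finset.Ioc (K k) (K (k + 1)) :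
      Fin (m + 1) → Finset ℕ+) := by
  have hrK (k : ℕ) : r ≤ K k := hr.trans (hK.monotone k.zero_le)
  refine TsSuccessive.admissible (fun i j hij a ha b hb => ?_)
    (Fin.cases (Finset.singleton_nonempty r) fun k => ?_)
    (Fin.cases (fun a ha => ?_) fun k a ha => ?_)
  · obtain ⟨j, rfl⟩ := Fin.exists_succ_eq_of_ne_zero (Fin.ne_zero_of_lt hij)
    rw [Fin.cons_succ, Finset.mem_Ioc] at hb
    refine lt_of_le_of_lt ?_ hb.1
    cases i using Fin.cases with
    | zero => exact (Finset.mem_singleton.1 ha).trans_le (hrK j)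
    | succ i => exact (Finset.mem_Ioc.1 ha).2.trans (hK.monotone (Fin.succ_lt_succ_iff.1 hij))
  · exact Finset.nonempty_Ioc.2 (hK k.val.lt_succ_self)
  · rwa [Finset.mem_singleton.1 ha]
  · exact hm.trans ((hrK k).trans_lt (Finset.mem_Ioc.1 ha).1)

namespace IsBlockSequence

variable {K : ℕ → ℕ+} {b : ℕ → ℕ+ →₀ ℝ}

lemma tsProj_Ioc_sum (hb : IsBlockSequence K b) {j m : ℕ} (hj : j < m) :
    tsProj (Finset.Ioc (K j) (K (j + 1))) (∑ k ∈ Finset.range m, b k) = b j := by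
  have hself : tsProj (Finset.Ioc (K j) (K (j + 1))) (b j) = b j :=
    (Finsupp.filter_eq_self_iff _ _).2 fun n hn => Finset.mem_Ioc.2 (hb.mem_Ioc j n hn)
  have hother (k : ℕ) (hk : k ≠ j) : tsProj (Finset.Ioc (K j) (K (j + 1))) (b k) = 0 := by
    refine tsProj_eq_zero_iff.2 fun n hn => ?_
    by_contra hkn
    have hjn := Finset.mem_Ioc.1 hn
    have hkn := hb.mem_Ioc k n hkn
    rcases hk.lt_or_gt with h | h
    · exact (hjn.1.trans_le hkn.2).not_ge (hb.strictMono.monotone h)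
    · exact (hkn.1.trans_le hjn.2).not_ge (hb.strictMono.monotone h)
  calc tsProj (Finset.Ioc (K j) (K (j + 1))) (∑ k ∈ Finset.range m, b k)
      = ∑ k ∈ Finset.range m, tsProj (Finset.Ioc (K j) (K (j + 1))) (b k) :=
        map_sum (tsProjₗ _) b _
    _ = b j := by
        rw [Finset.sum_eq_single_of_mem j (Finset.mem_range.2 hj) fun k _ hk => hother k hk, hself]

lemma mul_add_sum_tnorm_le (hθ : θ ∈ Set.Icc 0 1) (hb : IsBlockSequence K b) {y : ℕ+ →₀ ℝ}
    (hy : ∀ n, y n ≠ 0 → n ≤ K 0) {r : ℕ+} (hr : r ≤ K 0) {m : ℕ} (hm : m < (r : ℕ)) :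
    θ * (|y r| + ∑ k ∈ Finset.range m, tnorm θ (Schreier 1) (b k)) ≤
      tnorm θ (Schreier 1) (y + ∑ k ∈ Finset.range m, b k) := by
  have hy₀ (j : ℕ) : tsProj (Finset.Ioc (K j) (K (j + 1))) y = 0 :=
    tsProj_eq_zero_iff.2 fun n hn => by
      by_contra hyn
      exact ((hb.strictMono.monotone j.zero_le).trans_lt (Finset.mem_Ioc.1 hn).1).not_ge (hy n hyn)
  have hbr (k : ℕ) : b k r = 0 := by
    by_contra hne
    exact (hb.mem_Ioc k r hne).1.not_ge (hr.trans (hb.strictMono.monotone k.zero_le))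
  refine le_trans (mul_le_mul_of_nonneg_left ?_ hθ.1)
    ((admissible_cons_Ioc hb.strictMono hr hm).mul_sum_tnorm_le hθ _)
  rw [Fin.sum_univ_succ, Finset.sum_range]
  refine add_le_add ?_ (Finset.sum_le_sum fun k _ => ?_)
  · simpa [tsProj_apply, hbr] using abs_le_tnorm (S := Schreier 1) hθ
      (tsProj {r} (y + ∑ k ∈ Finset.range m, b k)) r
  · rw [Fin.cons_succ, tsProj_add, hy₀, zero_add, hb.tsProj_Ioc_sum k.isLt]

end IsBlockSequence

end Estimates

/-! ### Isometric copies of the basis -/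

section Copies

lemma sum_Icc_add_sum_Ioc {α M : Type*} [LinearOrder α] [LocallyFiniteOrder α] [AddCommMonoid M]
    (f : α → M) {a b c : α} (hab : a ≤ b) (hbc : b ≤ c) :
    ∑ i ∈ Finset.Icc a b, f i + ∑ i ∈ Finset.Ioc b c, f i = ∑ i ∈ Finset.Icc a c, f i := by
  have hunion : Finset.Icc a b ∪ Finset.Ioc b c = Finset.Icc a c := by
    rw [← Finset.coe_inj]
    push_cast
    exact Set.Icc_union_Ioc_eq_Icc hab hbc
  rw [← hunion, Finset.sum_union]
  exact Finset.disjoint_left.2 fun i hi hi' =>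
    (Finset.mem_Ioc.1 hi').1.not_ge (Finset.mem_Icc.1 hi).2

lemma exists_forall_norm_sub_sum_Icc_lt {E : Type*} [SeminormedAddCommGroup E] {v : ℕ+ → E}
    {x : E} (h : HasSum v x) {η : ℝ} (hη : 0 < η) :
    ∃ K₀, ∀ K ≥ K₀, ‖x - ∑ i ∈ Finset.Icc 1 K, v i‖ < η := by
  have hnear : ∀ᶠ s in Filter.atTop, ‖x - ∑ i ∈ s, v i‖ < η := by
    simpa only [dist_eq_norm', SummationFilter.unconditional_filter] using
      Metric.tendsto_nhds.1 h η hη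
  obtain ⟨s, hs⟩ := Filter.eventually_atTop.1 hnear
  obtain ⟨K₀, hK₀⟩ := s.bddAbove
  exact ⟨K₀, fun K hK => hs _ fun i hi => Finset.mem_Icc.2 ⟨one_le, (hK₀ hi).trans hK⟩⟩

variable {θ : ℝ} {S : Set (Finset ℕ+)} {X : Type*} [NormedAddCommGroup X] [NormedSpace ℝ X]

/-- The sequence `u` is isometrically equivalent to the unit vector basis of `T[θ, S]`. -/
def IsTsirelsonSequence (θ : ℝ) (S : Set (Finset ℕ+)) (u : ℕ+ → X) : Prop :=
  ∀ a : ℕ+ →₀ ℝ, ‖Finsupp.linearCombination ℝ u a‖ = tnorm θ S a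

namespace IsTsirelsonSequence

variable {e u : ℕ+ → X} {a : ℕ+ → ℕ+ → ℝ}

lemma norm_apply (hθ : θ ∈ Set.Icc 0 1) (hu : IsTsirelsonSequence θ S u) (i : ℕ+) :
    ‖u i‖ = 1 := by
  simpa [tnorm_single hθ] using hu (Finsupp.single i 1)

lemma abs_le_norm (hθ : θ ∈ Set.Icc 0 1) (he : IsTsirelsonSequence θ S e) {c : ℕ+ → ℝ} {x : X}
    (hc : HasSum (fun r => c r • e r) x) (r : ℕ+) : |c r| ≤ ‖x‖ := by
  refine ge_of_tendsto (Filter.Tendsto.norm hc) ?_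
  filter_upwards [Filter.eventually_ge_atTop {r}] with s hs
  rw [← linearCombination_tsRestrict, he]
  have hr : r ∈ s := Finset.singleton_subset_iff.1 hs
  simpa [tsRestrict_apply, hr] using abs_le_tnorm (S := S) hθ (tsRestrict c s) r

lemma exists_abs_eq_norm (hθ : θ ∈ Set.Icc 0 1) (he : IsTsirelsonSequence θ (Schreier 1) e)
    {N : ℕ+} (hN : θ * ((N : ℕ) - 1) ≤ 1) {c : ℕ+ → ℝ} {x : X}
    (hc : HasSum (fun r => c r • e r) x) (hcN : ∀ r, N < r → c r = 0) :
    ∃ r ≤ N, |c r| = ‖x‖ := by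
  have hmem {r : ℕ+} : r ∈ Finset.Icc 1 N ↔ r ≤ N := by simp
  have hx : x = Finsupp.linearCombination ℝ e (tsRestrict c (Finset.Icc 1 N)) := by
    rw [linearCombination_tsRestrict]
    refine hc.unique (hasSum_sum_of_ne_finset_zero fun r hr => ?_)
    rw [hcN r (not_le.1 (mt hmem.2 hr)), zero_smul]
  obtain ⟨r, hr, hmax⟩ := (Finset.Icc 1 N).exists_max_image (fun r => |c r|) ⟨N, hmem.2 le_rfl⟩
  refine ⟨r, hmem.1 hr, (he.abs_le_norm hθ hc r).antisymm ?_⟩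
  rw [hx, he]
  refine tnorm_le_of_forall_abs_le hθ hN (fun s hs => ?_) fun s => ?_ <;> rw [tsRestrict_apply]
  · rw [hcN s hs, ite_self]
  · split_ifs with hs
    · exact hmax s hs
    · simp

lemma abs_linearCombination_coeff_le (hθ : θ ∈ Set.Icc 0 1) (he : IsTsirelsonSequence θ S e)
    (hu : IsTsirelsonSequence θ S u) (ha : ∀ n, HasSum (fun r => a n r • e r) (u n)) (r : ℕ+)
    (b : ℕ+ →₀ ℝ) : |Finsupp.linearCombination ℝ (fun n => a n r) b| ≤ tnorm θ S b := by
  have hsum : HasSum (fun r => Finsupp.linearCombination ℝ (fun n => a n r) b • e r)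
      (Finsupp.linearCombination ℝ u b) := by
    simp only [Finsupp.linearCombination_apply, Finsupp.sum, Finset.sum_smul, smul_assoc]
    exact hasSum_sum fun n _ => (ha n).const_smul (b n)
  exact (he.abs_le_norm hθ hsum r).trans_eq (hu b)

lemma coeff_eq_zero_of_abs_eq_one (hθ : θ ∈ Set.Icc 0 (1 / 2)) (he : IsTsirelsonSequence θ S e)
    (hu : IsTsirelsonSequence θ S u) (ha : ∀ n, HasSum (fun r => a n r • e r) (u n))
    {i j r : ℕ+} (hi : |a i r| = 1) (hij : i ≠ j) : a j r = 0 := by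
  simpa using apply_single_eq_zero_of_abs_eq_one hθ
    (he.abs_linearCombination_coeff_le (Icc_zero_half_subset hθ) hu ha r) (by simpa using hi) hij

lemma tendsto_coeff_cofinite (hθ : θ ∈ Set.Ico 0 1) (he : IsTsirelsonSequence θ (Schreier 1) e)
    (hu : IsTsirelsonSequence θ (Schreier 1) u) (ha : ∀ n, HasSum (fun r => a n r • e r) (u n))
    (r : ℕ+) : Filter.Tendsto (fun n => a n r) Filter.cofinite (nhds 0) := by
  have hf := he.abs_linearCombination_coeff_le (Set.Ico_subset_Icc_self hθ) hu ha r
  refine (tendsto_apply_single_cofinite hθ (C := 1) fun b => (hf b).trans_eq (one_mul _).symm).congr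
    fun n => ?_
  rw [Finsupp.linearCombination_single, one_smul]

lemma exists_gliding_hump (hθ : θ ∈ Set.Ico 0 1) (he : IsTsirelsonSequence θ (Schreier 1) e)
    (hu : IsTsirelsonSequence θ (Schreier 1) u) (ha : ∀ n, HasSum (fun r => a n r • e r) (u n))
    {η : ℝ} (hη : 0 < η) (K : ℕ+) :
    ∃ K' n, K < K' ∧ n ∈ Set.Ioc K K' ∧ ‖u n - ∑ r ∈ Finset.Ioc K K', a n r • e r‖ < η := by
  have hhead : Filter.Tendsto (fun n => ∑ r ∈ Finset.Icc 1 K, a n r • e r) Filter.cofinite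
      (nhds 0) := by
    simpa using tendsto_finsetSum (Finset.Icc 1 K) fun r _ =>
      (he.tendsto_coeff_cofinite hθ hu ha r).smul_const (e r)
  have hlarge : ∀ᶠ n in Filter.cofinite, K < n := by
    simpa only [Filter.eventually_cofinite, not_lt] using! Set.finite_Iic K
  obtain ⟨n, hKn, hn⟩ := (hlarge.and (Metric.tendsto_nhds.1 hhead (η / 2) (half_pos hη))).exists
  obtain ⟨M, hM⟩ := exists_forall_norm_sub_sum_Icc_lt (ha n) (half_pos hη)
  refine ⟨max n M, n, lt_max_of_lt_left hKn, ⟨hKn, le_max_left n M⟩, ?_⟩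
  have htail := hM (max n M) (le_max_right n M)
  rw [← sum_Icc_add_sum_Ioc _ one_le (lt_max_of_lt_left hKn).le,
    sub_add_eq_sub_sub_swap] at htail
  rw [dist_zero_right] at hn
  calc ‖u n - ∑ r ∈ Finset.Ioc K (max n M), a n r • e r‖ < η / 2 + η / 2 :=
        (norm_le_norm_sub_add _ _).trans_lt (add_lt_add htail hn)
    _ = η := add_halves η

lemma norm_add_sum_le (hθ : θ ∈ Set.Icc 0 (1 / 2)) (hu : IsTsirelsonSequence θ (Schreier 1) u)
    {n : ℕ → ℕ+} (hn : Function.Injective n) {i : ℕ+} (hi : ∀ k, n k ≠ i) {m : ℕ}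
    (him : (i : ℕ) ≤ m) (hm : 1 ≤ θ * m) : ‖u i + ∑ k ∈ Finset.range m, u (n k)‖ ≤ θ * m := by
  have hnot : i ∉ (Finset.range m).image n := by simpa using fun k _ => hi k
  have hcard : (insert i ((Finset.range m).image n)).card = m + 1 := by
    rw [Finset.card_insert_of_notMem hnot, Finset.card_image_of_injective _ hn, Finset.card_range]
  have h := tnorm_tsRestrict_one_le hθ (Finset.mem_insert_self i _) hcard him hm
  rw [← hu, linearCombination_tsRestrict, Finset.sum_insert hnot,
    Finset.sum_image hn.injOn] at h
  simpa only [Pi.one_apply, one_smul] using h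

lemma mul_abs_le_of_approx (hθ : θ ∈ Set.Icc 0 (1 / 2))
    (he : IsTsirelsonSequence θ (Schreier 1) e) (hu : IsTsirelsonSequence θ (Schreier 1) u)
    {K : ℕ → ℕ+} {b : ℕ → ℕ+ →₀ ℝ} (hb : IsBlockSequence K b) {n : ℕ → ℕ+}
    (hn : ∀ k, n k ∈ Set.Ioc (K k) (K (k + 1))) {η : ℝ}
    (hbn : ∀ k, ‖u (n k) - Finsupp.linearCombination ℝ e (b k)‖ ≤ η) {y : ℕ+ →₀ ℝ}
    (hy : ∀ s, y s ≠ 0 → s ≤ K 0) {i : ℕ+} (hyi : ‖u i - Finsupp.linearCombination ℝ e y‖ ≤ η)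
    {r : ℕ+} (hr : r ≤ K 0) {m : ℕ} (him : (i : ℕ) ≤ m) (hm : 1 ≤ θ * m) (hmr : m < (r : ℕ)) :
    θ * |y r| ≤ (m + 1 + θ * m) * η := by
  have hθ' := Icc_zero_half_subset hθ
  have hnmono : StrictMono n :=
    strictMono_nat_of_lt_succ fun k => (hn k).2.trans_lt (hn (k + 1)).1
  have hir : i < r := PNat.coe_lt_coe i r |>.1 (him.trans_lt hmr)
  have hne (k : ℕ) : n k ≠ i :=
    (hir.trans_le (hr.trans (hb.strictMono.monotone k.zero_le)) |>.trans (hn k).1).ne'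
  have hblock (k : ℕ) : 1 - η ≤ tnorm θ (Schreier 1) (b k) := by
    have h := norm_sub_norm_le (u (n k)) (Finsupp.linearCombination ℝ e (b k))
    rw [hu.norm_apply hθ', he] at h
    linarith [hbn k]
  have hlower : θ * (|y r| + m * (1 - η)) ≤
      ‖Finsupp.linearCombination ℝ e (y + ∑ k ∈ Finset.range m, b k)‖ := by
    rw [he]
    refine le_trans ?_ (hb.mul_add_sum_tnorm_le hθ' hy hr hmr)
    gcongr
    · exact hθ.1
    · simpa using Finset.card_nsmul_le_sum (Finset.range m) _ (1 - η) fun k _ => hblock k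
  have hdist : ‖u i + ∑ k ∈ Finset.range m, u (n k) -
      Finsupp.linearCombination ℝ e (y + ∑ k ∈ Finset.range m, b k)‖ ≤ η + m * η := by
    rw [map_add, map_sum, add_sub_add_comm, ← Finset.sum_sub_distrib]
    refine (norm_add_le _ _).trans (add_le_add hyi ?_)
    simpa using norm_sum_le_of_le (Finset.range m) fun k _ => hbn k
  have hupper := hu.norm_add_sum_le hθ hnmono.injective hne him hm
  have htri := norm_le_norm_add_norm_sub (u i + ∑ k ∈ Finset.range m, u (n k))
    (Finsupp.linearCombination ℝ e (y + ∑ k ∈ Finset.range m, b k))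
  linarith

lemma mul_abs_coeff_le (hθ : θ ∈ Set.Icc 0 (1 / 2)) (he : IsTsirelsonSequence θ (Schreier 1) e)
    (hu : IsTsirelsonSequence θ (Schreier 1) u) (ha : ∀ n, HasSum (fun r => a n r • e r) (u n))
    {i r : ℕ+} {m : ℕ} (him : (i : ℕ) ≤ m) (hm : 1 ≤ θ * m) (hmr : m < (r : ℕ)) {η : ℝ}
    (hη : 0 < η) : θ * |a i r| ≤ (m + 1 + θ * m) * η := by
  obtain ⟨M, hM⟩ := exists_forall_norm_sub_sum_Icc_lt (ha i) hη
  have hθ' : θ ∈ Set.Ico 0 1 := ⟨hθ.1, hθ.2.trans_lt (by norm_num)⟩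
  obtain ⟨K, n, hK₀, hK, hhump⟩ :=
    exists_strictMono_chain (he.exists_gliding_hump hθ' hu ha hη) (max r M)
  have hblock : IsBlockSequence K fun k =>
      tsRestrict (a (n k)) (Finset.Ioc (K k) (K (k + 1))) :=
    ⟨hK, fun k s hs => Finset.mem_Ioc.1 <| support_tsRestrict_subset _ _ <|
      Finsupp.mem_support_iff.2 hs⟩
  have hbound := he.mul_abs_le_of_approx hθ hu hblock (fun k => (hhump k).1) (i := i) (r := r)
    (y := tsRestrict (a i) (Finset.Icc 1 (K 0))) (η := η)
    (fun k => by rw [linearCombination_tsRestrict]; exact (hhump k).2.le)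
    (fun s hs => (Finset.mem_Icc.1 <| support_tsRestrict_subset _ _ <|
      Finsupp.mem_support_iff.2 hs).2)
    (by rw [linearCombination_tsRestrict]; exact (hM _ (hK₀ ▸ le_max_right r M)).le)
    (hK₀ ▸ le_max_left r M) him hm hmr
  rwa [tsRestrict_apply, if_pos (Finset.mem_Icc.2 ⟨one_le, hK₀ ▸ le_max_left r M⟩)] at hbound

lemma coeff_eq_zero_of_lt (hθ : θ ∈ Set.Icc 0 (1 / 2))
    (he : IsTsirelsonSequence θ (Schreier 1) e) (hu : IsTsirelsonSequence θ (Schreier 1) u)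
    (ha : ∀ n, HasSum (fun r => a n r • e r) (u n)) {i r : ℕ+} {m : ℕ} (him : (i : ℕ) ≤ m)
    (hm : 1 ≤ θ * m) (hmr : m < (r : ℕ)) : a i r = 0 := by
  have hlim : Filter.Tendsto (fun η : ℝ => (m + 1 + θ * m) * η) (nhdsWithin 0 (Set.Ioi 0))
      (nhds 0) := by
    exact ((continuous_const_mul _).tendsto' 0 0 (mul_zero _)).mono_left nhdsWithin_le_nhds
  have hle : θ * |a i r| ≤ 0 := ge_of_tendsto hlim <|
    eventually_nhdsWithin_of_forall fun η hη => he.mul_abs_coeff_le hθ hu ha him hm hmr hη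
  have hθ₀ : 0 < θ := by
    refine hθ.1.lt_of_ne' fun h₀ => ?_
    rw [h₀, zero_mul] at hm
    exact zero_lt_one.not_ge hm
  exact abs_nonpos_iff.1 (nonpos_of_mul_nonpos_right hle hθ₀)

end IsTsirelsonSequence

end Copies

/-! ### Monomial matrices -/

section Monomial

variable {ι : Type*} [LinearOrder ι] {N : ι} {a : ι → ι → ℝ}

lemma exists_perm_abs_eq_one (hN : (Set.Iic N).Finite)
    (hcol : ∀ i j r, |a i r| = 1 → i ≠ j → a j r = 0)
    (hpeak : ∀ i ≤ N, ∃ r ≤ N, |a i r| = 1) :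
    ∃ σ : Equiv.Perm (Set.Iic N), ∀ i : Set.Iic N, |a i (σ i)| = 1 := by
  have : Finite (Set.Iic N) := hN
  choose f hfN hf using hpeak
  let g : Set.Iic N → Set.Iic N := fun i => ⟨f i i.2, hfN i i.2⟩
  have hg : Function.Injective g := fun i j hij => by
    by_contra hne
    have hzero := hcol i j (g i) (hf i i.2) (Subtype.coe_injective.ne hne)
    have hone : |a j (g j)| = 1 := hf j j.2
    rw [← hij, hzero, abs_zero] at hone
    exact zero_ne_one hone
  exact ⟨Equiv.ofBijective g (Finite.injective_iff_bijective.1 hg), fun i => hf i i.2⟩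

lemma exists_perm_monomial [WellFoundedLT ι] (hN : (Set.Iic N).Finite)
    (hcol : ∀ i j r, |a i r| = 1 → i ≠ j → a j r = 0)
    (htri : ∀ i r, N < r → i < r → a i r = 0)
    (hpeak : ∀ i ≤ N, ∃ r ≤ N, |a i r| = 1)
    (hsingle : ∀ i r, (∀ s ≠ r, a i s = 0) → |a i r| = 1) :
    ∃ π : Equiv.Perm ι, (∀ i, N < i → π i = i) ∧
      ∀ i, |a i (π i)| = 1 ∧ ∀ r ≠ π i, a i r = 0 := by
  obtain ⟨σ, hσ⟩ := exists_perm_abs_eq_one hN hcol hpeak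
  have hhead (i : ι) (r : Set.Iic N) (hi : σ.symm r ≠ i) : a i r = 0 :=
    hcol (σ.symm r) i r (by simpa using hσ (σ.symm r)) hi
  have htail (i : ι) (hi : N < i) : |a i i| = 1 ∧ ∀ r ≠ i, a i r = 0 := by
    induction i using WellFoundedLT.induction with
    | ind i ih =>
      have hzero : ∀ r ≠ i, a i r = 0 := fun r hri => by
        rcases le_or_gt r N with hrN | hrN
        · exact hhead i ⟨r, hrN⟩ (lt_of_le_of_lt (σ.symm ⟨r, hrN⟩).2 hi).ne
        · rcases hri.lt_or_gt with hlt | hgt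
          · exact hcol r i r (ih r hlt hrN).1 hri
          · exact htri i r hrN hgt
      exact ⟨hsingle i i hzero, hzero⟩
  refine ⟨Equiv.Perm.ofSubtype σ,
    fun i hi => Equiv.Perm.ofSubtype_apply_of_not_mem σ hi.not_ge, fun i => ?_⟩
  rcases le_or_gt i N with hi | hi
  · rw [Equiv.Perm.ofSubtype_apply_of_mem σ hi]
    refine ⟨hσ ⟨i, hi⟩, fun r hr => ?_⟩
    rcases le_or_gt r N with hrN | hrN
    · refine hhead i ⟨r, hrN⟩ fun h => hr ?_
      have hsymm : σ.symm ⟨r, hrN⟩ = ⟨i, hi⟩ := Subtype.ext h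
      rw [← hsymm, Equiv.apply_symm_apply]
    · exact htri i r hrN (hi.trans_lt hrN)
  · rw [Equiv.Perm.ofSubtype_apply_of_not_mem σ hi.not_ge]
    exact htail i hi

end Monomial

/-! ### Linear isometries -/

section Isometries

variable {θ : ℝ} {X : Type*} [NormedAddCommGroup X] [NormedSpace ℝ X] {e u : ℕ+ → X}

lemma eq_smul_of_hasSum {c : ℕ+ → ℝ} {x : X} (hc : HasSum (fun r => c r • e r) x) {r : ℕ+}
    (hr : ∀ s ≠ r, c s = 0) : x = c r • e r :=
  hc.unique <| hasSum_single r fun s hs => by rw [hr s hs, zero_smul]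

lemma IsTsirelsonSequence.map {S : Set (Finset ℕ+)} (he : IsTsirelsonSequence θ S e)
    (U : X →ₗᵢ[ℝ] X) : IsTsirelsonSequence θ S (U ∘ e) := fun a => by
  have hmap := Finsupp.apply_linearCombination ℝ U.toLinearMap e a
  exact (congrArg norm hmap.symm).trans ((U.norm_map _).trans (he a))

theorem tsirelson_linearIsometry_form_general (hθ0 : 0 < θ) (hθ : θ ≤ 1 / 2)
    (he : IsTsirelsonSequence θ (Schreier 1) e) (hu : IsTsirelsonSequence θ (Schreier 1) u)
    (hexp : ∀ i, ∃ a : ℕ+ → ℝ, HasSum (fun r => a r • e r) (u i)) :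
    ∃ (ε : ℕ+ → ℝ) (π : Equiv.Perm ℕ+),
      (∀ i, ε i = 1 ∨ ε i = -1) ∧
      (∀ i : ℕ+, ⌈θ⁻¹⌉₊ < (i : ℕ) → π i = i) ∧
      (∀ i : ℕ+, u i = ε i • e (π i)) := by
  choose a ha using hexp
  have hθ' : θ ∈ Set.Icc 0 (1 / 2) := ⟨hθ0.le, hθ⟩
  have hθ₁ : θ ∈ Set.Icc 0 1 := Icc_zero_half_subset hθ'
  let N : ℕ+ := ⟨⌈θ⁻¹⌉₊, Nat.ceil_pos.2 (inv_pos.2 hθ0)⟩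
  have hN : 1 ≤ θ * (N : ℕ) := (inv_le_iff_one_le_mul₀' hθ0).1 (Nat.le_ceil θ⁻¹)
  have hN' : θ * ((N : ℕ) - 1) ≤ 1 :=
    (le_inv_mul_iff₀ hθ0).1 <| by
      rw [mul_one]
      exact sub_le_iff_le_add.2 (Nat.ceil_lt_add_one (inv_nonneg.2 hθ0.le)).le
  have htri (i r : ℕ+) (hNr : N < r) (hir : i < r) : a i r = 0 := by
    refine he.coeff_eq_zero_of_lt hθ' hu ha (m := (max i N : ℕ+)) ?_ ?_ ?_
    · exact PNat.coe_le_coe i _ |>.2 (le_max_left i N)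
    · refine hN.trans ?_
      gcongr
      exact le_max_right i N
    · exact PNat.coe_lt_coe _ r |>.2 (max_lt hir hNr)
  obtain ⟨π, hπN, hπ⟩ := exists_perm_monomial (a := a) (Set.finite_Iic N)
    (fun i j r hi hij => he.coeff_eq_zero_of_abs_eq_one hθ' hu ha hi hij) htri
    (fun i hi => hu.norm_apply hθ₁ i ▸
      he.exists_abs_eq_norm hθ₁ hN' (ha i) fun r hr => htri i r hr (hi.trans_lt hr))
    (fun i r hr => by
      simpa [norm_smul, he.norm_apply hθ₁, hu.norm_apply hθ₁] using
        (congrArg norm (eq_smul_of_hasSum (ha i) hr)).symm)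
  exact ⟨fun i => a i (π i), π, fun i => eq_or_eq_neg_of_abs_eq (hπ i).1, fun i hi => hπN i hi,
    fun i => eq_smul_of_hasSum (ha i) (hπ i).2⟩

end Isometries

/-- Every linear isometry of `T[θ, S₁]` maps `e_i` to `ε_i e_{π i}`,
where `π` is a permutation of `{1, …, ⌈θ⁻¹⌉}` (fixing all larger indices). -/
theorem tsirelson_linearIsometry_form
    (θ : ℝ) (hθ0 : 0 < θ) (hθ : θ ≤ 1 / 2)
    (X : Type*) [NormedAddCommGroup X] [NormedSpace ℝ X] (e : ℕ+ → X)
    (hX : IsTsirelsonSpace θ 1 X e) (U : X →ₗᵢ[ℝ] X) :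
    ∃ (ε : ℕ+ → ℝ) (π : Equiv.Perm ℕ+),
      (∀ i, ε i = 1 ∨ ε i = -1) ∧
      (∀ i : ℕ+, ⌈θ⁻¹⌉₊ < (i : ℕ) → π i = i) ∧
      (∀ i : ℕ+, U (e i) = ε i • e (π i)) := by
  have he : IsTsirelsonSequence θ (Schreier 1) e := hX.norm_embed
  exact tsirelson_linearIsometry_form_general hθ0 hθ he (he.map U) fun i =>
    (hX.expansion (U (e i))).exists
end
end

section
/- Let θ ∈ (0, 1/2]. A linear map U : T[θ, S₁] → T[θ, S₁] is a linear isometry if and only if there exist a sequence (ε_i)_{i=1}^∞ with values in {−1, 1} and a permutation π of {1, 2, …, ⌊θ⁻¹⌋} such that U e_i = ε_i e_{π(i)} for 1 ≤ i ≤ ⌊θ⁻¹⌋ and U e_i = ε_i e_i for i > ⌊θ⁻¹⌋. -/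
open scoped BigOperators

noncomputable section

/-!
Families of at most `⌊θ⁻¹⌋` sets never increase the norm, and the larger ones live beyond the first
`⌊θ⁻¹⌋` coordinates; so the norm of `T[θ, S₁]` is invariant under permutations of these coordinates.

Conversely, let `U` be an isometry. If all coordinates of `U e_i` were less than `1` in modulus,
then `U e_i` would essentially be normed by a family of more than `⌊θ⁻¹⌋` sets. Add to `e_i` a
vector `z` spread far out, with signs such that `U z` nearly vanishes on any prescribed finite set.
Then `‖e_i + z‖ ≈ 1`, while the least useful set of the family can be traded for the tail of `U z`,
so that `‖U e_i + U z‖` is nearly at least `1 - 1 / (⌊θ⁻¹⌋ + 1) + θ > 1`. Thus `U e_i` has a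
coordinate `± 1` at some `p i`. Since `‖e_i ± e_j‖ = 1`, all other `U e_j` vanish at `p i`, and `p`
is injective. Comparing the norms of sums of unit vectors with those of their images gives
`p i ≤ max i ⌊θ⁻¹⌋`, which forces `p` to be a permutation fixing every `i > ⌊θ⁻¹⌋`.
-/

namespace Tsirelson

variable {θ B : ℝ} {S : Set (Finset ℕ+)} {x y : ℕ+ →₀ ℝ}

/-! ### Projections and the `ℓ₁` norm on `c₀₀` -/

/-- The `ℓ₁` norm on `c₀₀`, which dominates every Tsirelson norm with `θ ≤ 1`. -/
def l1Norm (x : ℕ+ →₀ ℝ) : ℝ := ∑ i ∈ x.support, |x i|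

theorem l1Norm_eq_sum {F : Finset ℕ+} (h : x.support ⊆ F) : l1Norm x = ∑ i ∈ F, |x i| :=
  Finset.sum_subset h fun i _ hi => by simp [Finsupp.notMem_support_iff.1 hi]

theorem sum_abs_le_l1Norm (x : ℕ+ →₀ ℝ) (F : Finset ℕ+) : ∑ i ∈ F, |x i| ≤ l1Norm x := by
  rw [l1Norm_eq_sum (Finset.subset_union_right (s₁ := F))]
  exact Finset.sum_le_sum_of_subset_of_nonneg Finset.subset_union_left fun _ _ _ => abs_nonneg _

theorem abs_le_l1Norm (x : ℕ+ →₀ ℝ) (i : ℕ+) : |x i| ≤ l1Norm x := by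
  simpa using sum_abs_le_l1Norm x {i}

theorem l1Norm_nonneg (x : ℕ+ →₀ ℝ) : 0 ≤ l1Norm x :=
  Finset.sum_nonneg fun _ _ => abs_nonneg _

theorem l1Norm_add_le (x y : ℕ+ →₀ ℝ) : l1Norm (x + y) ≤ l1Norm x + l1Norm y :=
  calc l1Norm (x + y) ≤ ∑ i ∈ (x + y).support, (|x i| + |y i|) :=
        Finset.sum_le_sum fun i _ => abs_add_le _ _
    _ ≤ l1Norm x + l1Norm y := by
        rw [Finset.sum_add_distrib]
        exact add_le_add (sum_abs_le_l1Norm x _) (sum_abs_le_l1Norm y _)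

theorem l1Norm_single (i : ℕ+) (c : ℝ) : l1Norm (Finsupp.single i c) = |c| := by
  rw [l1Norm_eq_sum Finsupp.support_single_subset]
  simp

theorem tsProj_apply (E : Finset ℕ+) (x : ℕ+ →₀ ℝ) (i : ℕ+) :
    tsProj E x i = if i ∈ E then x i else 0 :=
  Finsupp.filter_apply ..

theorem abs_tsProj_le (E : Finset ℕ+) (x : ℕ+ →₀ ℝ) (i : ℕ+) : |tsProj E x i| ≤ |x i| := by
  rw [tsProj_apply]
  split_ifs <;> simp

theorem abs_tsProj_le_abs_tsProj (h : ∀ i, |x i| ≤ |y i|) (E : Finset ℕ+) (i : ℕ+) :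
    |tsProj E x i| ≤ |tsProj E y i| := by
  simp only [tsProj_apply]
  split_ifs <;> simp [h i]

theorem l1Norm_tsProj (E : Finset ℕ+) (x : ℕ+ →₀ ℝ) : l1Norm (tsProj E x) = ∑ i ∈ E, |x i| := by
  have hsupp : (tsProj E x).support ⊆ E := fun i hi => by
    by_contra h
    simp [tsProj_apply, h] at hi
  rw [l1Norm_eq_sum hsupp]
  exact Finset.sum_congr rfl fun i hi => by rw [tsProj_apply, if_pos hi]

theorem sum_l1Norm_tsProj_le {ι : Type*} [Fintype ι] {E : ι → Finset ℕ+}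
    (hE : Pairwise (Function.onFun Disjoint E)) (x : ℕ+ →₀ ℝ) :
    ∑ l, l1Norm (tsProj (E l) x) ≤ l1Norm x := by
  simp only [l1Norm_tsProj]
  rw [← Finset.sum_biUnion (hE.set_pairwise _)]
  exact sum_abs_le_l1Norm x _

theorem pairwise_disjoint_of_tsAdmissible {d : ℕ} {E : Fin d → Finset ℕ+} (hE : TsAdmissible S E) :
    Pairwise (Function.onFun Disjoint E) := fun i j hij =>
  Finset.disjoint_left.2 fun a hi hj => hij.lt_or_gt.elim
    (fun h => (hE.2.1 i j h a hi a hj).false) (fun h => (hE.2.1 j i h a hj a hi).false)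

/-- The restriction of a real sequence to a finite set of coordinates, as an element of `c₀₀`. -/
def truncate (F : Finset ℕ+) (a : ℕ+ → ℝ) : ℕ+ →₀ ℝ :=
  Finsupp.indicator F fun i _ => a i

theorem truncate_apply (F : Finset ℕ+) (a : ℕ+ → ℝ) (i : ℕ+) :
    truncate F a i = if i ∈ F then a i else 0 := by
  simp [truncate, Finsupp.indicator_apply]

theorem support_truncate_subset (F : Finset ℕ+) (a : ℕ+ → ℝ) : (truncate F a).support ⊆ F :=
  Finsupp.support_indicator_subset F _

theorem l1Norm_truncate (F : Finset ℕ+) (a : ℕ+ → ℝ) : l1Norm (truncate F a) = ∑ i ∈ F, |a i| := by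
  rw [l1Norm_eq_sum (support_truncate_subset F a)]
  exact Finset.sum_congr rfl fun i hi => by rw [truncate_apply, if_pos hi]

theorem linearCombination_truncate {M : Type*} [AddCommGroup M] [Module ℝ M] (v : ℕ+ → M)
    (F : Finset ℕ+) (a : ℕ+ → ℝ) :
    Finsupp.linearCombination ℝ v (truncate F a) = ∑ i ∈ F, a i • v i := by
  rw [Finsupp.linearCombination_apply,
    Finsupp.sum_of_support_subset _ (support_truncate_subset F a) _ (by simp)]
  exact Finset.sum_congr rfl fun i hi => by rw [truncate_apply, if_pos hi]

/-! ### The Tsirelson norm as a least fixed point -/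

/- The norm is the least solution of its implicit equation, so an upper bound only has to be
propagated along admissible families: `P x B` reads "`B` is claimed to bound the norm of `x`". -/
theorem tnormAux_le_of_rel (hθ₀ : 0 ≤ θ) {P : (ℕ+ →₀ ℝ) → ℝ → Prop}
    (hsup : ∀ {x B}, P x B → ∀ i, |x i| ≤ B)
    (hadm : ∀ {x B}, P x B → ∀ {d : ℕ} {E : Fin d → Finset ℕ+}, TsAdmissible S E →
      ∃ b : Fin d → ℝ, (∀ l, P (tsProj (E l) x) (b l)) ∧ θ * ∑ l, b l ≤ B)
    (m : ℕ) (h : P x B) : tnormAux θ S m x ≤ B := by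
  induction m generalizing x B with
  | zero => exact ciSup_le (hsup h)
  | succ m ih =>
    refine max_le (ih h) (Real.sSup_le ?_ ((abs_nonneg _).trans (hsup h 1)))
    rintro _ ⟨d, E, hE, rfl⟩
    obtain ⟨b, hb, hbB⟩ := hadm h hE
    exact (mul_le_mul_of_nonneg_left (Finset.sum_le_sum fun l _ => ih (hb l)) hθ₀).trans hbB

theorem tnorm_le_of_rel (hθ₀ : 0 ≤ θ) {P : (ℕ+ →₀ ℝ) → ℝ → Prop}
    (hsup : ∀ {x B}, P x B → ∀ i, |x i| ≤ B)
    (hadm : ∀ {x B}, P x B → ∀ {d : ℕ} {E : Fin d → Finset ℕ+}, TsAdmissible S E →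
      ∃ b : Fin d → ℝ, (∀ l, P (tsProj (E l) x) (b l)) ∧ θ * ∑ l, b l ≤ B)
    (h : P x B) : tnorm θ S x ≤ B :=
  ciSup_le fun m => tnormAux_le_of_rel hθ₀ hsup hadm m h

theorem mul_sum_l1Norm_tsProj_le (hθ₁ : θ ≤ 1) {d : ℕ} {E : Fin d → Finset ℕ+}
    (hE : TsAdmissible S E) (x : ℕ+ →₀ ℝ) : θ * ∑ l, l1Norm (tsProj (E l) x) ≤ l1Norm x :=
  (mul_le_of_le_one_left (Finset.sum_nonneg fun _ _ => l1Norm_nonneg _) hθ₁).trans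
    (sum_l1Norm_tsProj_le (pairwise_disjoint_of_tsAdmissible hE) x)

theorem tnormAux_le_l1Norm (hθ₀ : 0 ≤ θ) (hθ₁ : θ ≤ 1) (m : ℕ) (x : ℕ+ →₀ ℝ) :
    tnormAux θ S m x ≤ l1Norm x := by
  refine tnormAux_le_of_rel (P := fun x B => l1Norm x = B) hθ₀ ?_ ?_ m rfl
  · rintro x _ rfl
    exact abs_le_l1Norm x
  · rintro x _ rfl d E hE
    exact ⟨_, fun _ => rfl, mul_sum_l1Norm_tsProj_le hθ₁ hE x⟩

theorem tnorm_le_l1Norm (hθ₀ : 0 ≤ θ) (hθ₁ : θ ≤ 1) (x : ℕ+ →₀ ℝ) : tnorm θ S x ≤ l1Norm x :=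
  ciSup_le fun m => tnormAux_le_l1Norm hθ₀ hθ₁ m x

theorem bddAbove_range_tnormAux (hθ₀ : 0 ≤ θ) (hθ₁ : θ ≤ 1) (x : ℕ+ →₀ ℝ) :
    BddAbove (Set.range fun m => tnormAux θ S m x) :=
  ⟨l1Norm x, Set.forall_mem_range.2 fun m => tnormAux_le_l1Norm hθ₀ hθ₁ m x⟩

theorem tnormAux_le_tnorm (hθ₀ : 0 ≤ θ) (hθ₁ : θ ≤ 1) (m : ℕ) (x : ℕ+ →₀ ℝ) :
    tnormAux θ S m x ≤ tnorm θ S x :=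
  le_ciSup (bddAbove_range_tnormAux hθ₀ hθ₁ x) m

theorem abs_le_tnorm (hθ₀ : 0 ≤ θ) (hθ₁ : θ ≤ 1) (x : ℕ+ →₀ ℝ) (i : ℕ+) : |x i| ≤ tnorm θ S x :=
  (le_ciSup (f := fun i => |x i|) ⟨l1Norm x, Set.forall_mem_range.2 (abs_le_l1Norm x)⟩ i).trans
    (tnormAux_le_tnorm hθ₀ hθ₁ 0 x)

theorem tnorm_nonneg (hθ₀ : 0 ≤ θ) (hθ₁ : θ ≤ 1) (x : ℕ+ →₀ ℝ) : 0 ≤ tnorm θ S x :=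
  (abs_nonneg _).trans (abs_le_tnorm hθ₀ hθ₁ x 1)

theorem tnorm_zero (hθ₀ : 0 ≤ θ) (hθ₁ : θ ≤ 1) : tnorm θ S 0 = 0 :=
  le_antisymm ((tnorm_le_l1Norm hθ₀ hθ₁ 0).trans_eq (by simp [l1Norm])) (tnorm_nonneg hθ₀ hθ₁ 0)

theorem tnorm_single_one (hθ₀ : 0 ≤ θ) (hθ₁ : θ ≤ 1) (i : ℕ+) :
    tnorm θ S (Finsupp.single i 1) = 1 := by
  refine le_antisymm ((tnorm_le_l1Norm hθ₀ hθ₁ _).trans_eq (by simp [l1Norm_single])) ?_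
  simpa using abs_le_tnorm (S := S) hθ₀ hθ₁ (Finsupp.single i 1) i

theorem mul_sum_tnormAux_le (hθ₀ : 0 ≤ θ) (hθ₁ : θ ≤ 1) {d : ℕ} {E : Fin d → Finset ℕ+}
    (hE : TsAdmissible S E) (m : ℕ) (x : ℕ+ →₀ ℝ) :
    θ * ∑ l, tnormAux θ S m (tsProj (E l) x) ≤ tnormAux θ S (m + 1) x := by
  refine le_max_of_le_right (le_csSup ⟨l1Norm x, ?_⟩ ⟨d, E, hE, rfl⟩)
  rintro _ ⟨d, E, hE, rfl⟩
  refine le_trans ?_ (mul_sum_l1Norm_tsProj_le hθ₁ hE x)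
  gcongr
  exact tnormAux_le_l1Norm hθ₀ hθ₁ m _

theorem mul_sum_tnorm_le (hθ₀ : 0 ≤ θ) (hθ₁ : θ ≤ 1) {d : ℕ} {E : Fin d → Finset ℕ+}
    (hE : TsAdmissible S E) (x : ℕ+ →₀ ℝ) :
    θ * ∑ l, tnorm θ S (tsProj (E l) x) ≤ tnorm θ S x := by
  have htendsto (y : ℕ+ →₀ ℝ) :
      Filter.Tendsto (fun m => tnormAux θ S m y) Filter.atTop (nhds (tnorm θ S y)) :=
    tendsto_atTop_ciSup (monotone_nat_of_le_succ fun _ => le_max_left _ _)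
      (bddAbove_range_tnormAux hθ₀ hθ₁ y)
  exact le_of_tendsto' ((tendsto_finsetSum _ fun l _ => htendsto _).const_mul θ) fun m =>
    (mul_sum_tnormAux_le hθ₀ hθ₁ hE m x).trans (tnormAux_le_tnorm hθ₀ hθ₁ _ x)

theorem tnorm_le_tnorm_of_abs_le (hθ₀ : 0 ≤ θ) (hθ₁ : θ ≤ 1) (h : ∀ i, |x i| ≤ |y i|) :
    tnorm θ S x ≤ tnorm θ S y := by
  refine tnorm_le_of_rel (P := fun x B => ∃ y, (∀ i, |x i| ≤ |y i|) ∧ tnorm θ S y = B) hθ₀ ?_ ?_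
    ⟨y, h, rfl⟩
  · rintro x _ ⟨y, hxy, rfl⟩ i
    exact (hxy i).trans (abs_le_tnorm hθ₀ hθ₁ y i)
  · rintro x _ ⟨y, hxy, rfl⟩ d E hE
    exact ⟨_, fun l => ⟨_, abs_tsProj_le_abs_tsProj hxy (E l), rfl⟩, mul_sum_tnorm_le hθ₀ hθ₁ hE y⟩

/- A family of `d ≤ θ⁻¹` sets cannot increase the norm: it averages `d` norms of restrictions of `x`
with total weight `θ d ≤ 1`. -/
theorem tnorm_le_of_floor_inv_lt (hθ₀ : 0 ≤ θ) (hθ₁ : θ ≤ 1) (hx : ∀ i, |x i| ≤ B)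
    (h : ∀ {d : ℕ} {E : Fin d → Finset ℕ+}, TsAdmissible S E → ⌊θ⁻¹⌋₊ < d →
      θ * ∑ l, tnorm θ S (tsProj (E l) x) ≤ B) : tnorm θ S x ≤ B := by
  refine tnorm_le_of_rel (P := fun x B => (∀ i, |x i| ≤ B) ∧ ∀ {d : ℕ} {E : Fin d → Finset ℕ+},
    TsAdmissible S E → ⌊θ⁻¹⌋₊ < d → θ * ∑ l, tnorm θ S (tsProj (E l) x) ≤ B) hθ₀ And.left ?_ ⟨hx, h⟩
  rintro x B ⟨hx, h⟩ d E hE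
  rcases lt_or_ge ⌊θ⁻¹⌋₊ d with hd | hd
  · exact ⟨fun l => tnorm θ S (tsProj (E l) x), fun l => ⟨abs_le_tnorm hθ₀ hθ₁ _,
      fun hE' _ => mul_sum_tnorm_le hθ₀ hθ₁ hE' _⟩, h hE hd⟩
  · refine ⟨fun _ => B,
      fun l => ⟨fun i => (abs_tsProj_le _ _ _).trans (hx i), fun hE' hd' => ?_⟩, ?_⟩
    · refine le_trans ?_ (h hE' hd')
      gcongr
      exact tnorm_le_tnorm_of_abs_le hθ₀ hθ₁
        (abs_tsProj_le_abs_tsProj (abs_tsProj_le _ x) _)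
    · have hB : 0 ≤ B := (abs_nonneg _).trans (hx 1)
      have hθd : θ * d ≤ 1 :=
        calc θ * d ≤ θ * θ⁻¹ := by
              gcongr
              exact (Nat.cast_le.2 hd).trans (Nat.floor_le (inv_nonneg.2 hθ₀))
          _ ≤ 1 := mul_inv_le_one
      calc θ * ∑ _ : Fin d, B = θ * d * B := by simp [mul_assoc]
        _ ≤ B := mul_le_of_le_one_left hB hθd

theorem tnorm_le_of_admissible (hθ₀ : 0 ≤ θ) (hθ₁ : θ ≤ 1) (hx : ∀ i, |x i| ≤ B)
    (h : ∀ {d : ℕ} {E : Fin d → Finset ℕ+}, TsAdmissible S E →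
      θ * ∑ l, tnorm θ S (tsProj (E l) x) ≤ B) : tnorm θ S x ≤ B :=
  tnorm_le_of_floor_inv_lt hθ₀ hθ₁ hx fun hE _ => h hE

theorem tnorm_le_of_mul_l1Norm_le (hθ₀ : 0 ≤ θ) (hθ₁ : θ ≤ 1) (hx : ∀ i, |x i| ≤ B)
    (h : θ * l1Norm x ≤ B) : tnorm θ S x ≤ B := by
  refine tnorm_le_of_admissible hθ₀ hθ₁ hx fun {d E} hE => le_trans ?_ h
  gcongr
  calc ∑ l, tnorm θ S (tsProj (E l) x) ≤ ∑ l, l1Norm (tsProj (E l) x) :=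
        Finset.sum_le_sum fun l _ => tnorm_le_l1Norm hθ₀ hθ₁ _
    _ ≤ l1Norm x := sum_l1Norm_tsProj_le (pairwise_disjoint_of_tsAdmissible hE) x

theorem tnorm_le_half_l1Norm_add (hθ₀ : 0 ≤ θ) (hθ : θ ≤ 1 / 2) (hx : ∀ i, |x i| ≤ B) :
    tnorm θ S x ≤ (l1Norm x + B) / 2 := by
  refine tnorm_le_of_mul_l1Norm_le hθ₀ (by linarith) (fun i => ?_) ?_
  · linarith [hx i, abs_le_l1Norm x i]
  · have hB : 0 ≤ B := (abs_nonneg _).trans (hx 1)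
    nlinarith [l1Norm_nonneg x]

theorem tnorm_single_add_single_le_one (hθ₀ : 0 ≤ θ) (hθ : θ ≤ 1 / 2) {i j : ℕ+} (hij : i ≠ j)
    {c : ℝ} (hc : |c| ≤ 1) : tnorm θ S (Finsupp.single i 1 + Finsupp.single j c) ≤ 1 := by
  refine tnorm_le_of_mul_l1Norm_le hθ₀ (by linarith) (fun k => ?_) ?_
  · simp only [Finsupp.add_apply, Finsupp.single_apply]
    grind
  · have h := l1Norm_add_le (Finsupp.single i 1) (Finsupp.single j c)
    rw [l1Norm_single, l1Norm_single, abs_one] at h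
    nlinarith

/-! ### Norm estimates in `T[θ, S₁]` -/

theorem mem_schreier_one {F : Finset ℕ+} : F ∈ Schreier 1 ↔ ∀ a ∈ F, F.card ≤ (a : ℕ) :=
  Iff.rfl

theorem tsAdmissible_schreier_one_iff {d : ℕ} {E : Fin d → Finset ℕ+} :
    TsAdmissible (Schreier 1) E ↔ (∀ l, (E l).Nonempty) ∧
      (∀ i j, i < j → ∀ a ∈ E i, ∀ b ∈ E j, a < b) ∧ ∀ l, ∀ a ∈ E l, d ≤ (a : ℕ) := by
  constructor
  · rintro ⟨hne, hlt, μ, hμ, hS⟩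
    have hμ_mono : StrictMono μ := fun i j hij => hlt i j hij _ (hμ i).1 _ (hμ j).1
    refine ⟨hne, hlt, fun l a ha => ?_⟩
    have hcard := mem_schreier_one.1 hS (μ l) (Finset.mem_image_of_mem _ (Finset.mem_univ l))
    rw [Finset.card_image_of_injective _ hμ_mono.injective, Finset.card_fin] at hcard
    exact hcard.trans (PNat.coe_le_coe _ _ |>.2 ((hμ l).2 ha))
  · rintro ⟨hne, hlt, hd⟩
    refine ⟨hne, hlt, fun l => (E l).min' (hne l), fun l => Finset.isLeast_min' _ _,
      mem_schreier_one.2 fun a ha => ?_⟩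
    obtain ⟨l, -, rfl⟩ := Finset.mem_image.1 ha
    calc _ ≤ (Finset.univ : Finset (Fin d)).card := Finset.card_image_le
      _ = d := Finset.card_fin d
      _ ≤ _ := hd l _ (Finset.min'_mem _ _)

theorem mul_sum_tnorm_tsProj_le {ι : Type*} [LinearOrder ι] (hθ₀ : 0 ≤ θ) (hθ₁ : θ ≤ 1)
    (x : ℕ+ →₀ ℝ) {s : Finset ι} {E : ι → Finset ℕ+}
    (hlt : ∀ i ∈ s, ∀ j ∈ s, i < j → ∀ a ∈ E i, ∀ b ∈ E j, a < b)
    (hcard : ∀ i ∈ s, ∀ a ∈ E i, s.card ≤ (a : ℕ)) :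
    θ * ∑ i ∈ s, tnorm θ (Schreier 1) (tsProj (E i) x) ≤ tnorm θ (Schreier 1) x := by
  set t := s.filter fun i => (E i).Nonempty
  have hmem (i : t) : (i : ι) ∈ s ∧ (E i).Nonempty := Finset.mem_filter.1 i.2
  let f := t.orderIsoOfFin rfl
  have hsum : ∑ i ∈ s, tnorm θ (Schreier 1) (tsProj (E i) x) =
      ∑ l, tnorm θ (Schreier 1) (tsProj (E (f l)) x) := by
    have hfilter : ∑ i ∈ t, tnorm θ (Schreier 1) (tsProj (E i) x) =
        ∑ i ∈ s, tnorm θ (Schreier 1) (tsProj (E i) x) := by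
      refine Finset.sum_filter_of_ne fun i _ hi => ?_
      contrapose! hi
      rw [hi, show tsProj ∅ x = 0 by ext; simp [tsProj_apply], tnorm_zero hθ₀ hθ₁]
    rw [← hfilter, ← Finset.sum_coe_sort t]
    exact (Equiv.sum_comp f.toEquiv fun i : t => tnorm θ (Schreier 1) (tsProj (E i) x)).symm
  rw [hsum]
  refine mul_sum_tnorm_le hθ₀ hθ₁ (tsAdmissible_schreier_one_iff.2
    ⟨fun l => (hmem (f l)).2, fun i j hij => ?_, fun l a ha => ?_⟩) x
  · exact hlt _ (hmem _).1 _ (hmem _).1 (f.strictMono hij)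
  · exact (Finset.card_filter_le s _).trans (hcard _ (hmem _).1 a ha)

theorem mul_sum_abs_le_tnorm (hθ₀ : 0 ≤ θ) (hθ₁ : θ ≤ 1) (x : ℕ+ →₀ ℝ) {F : Finset ℕ+}
    (hF : F ∈ Schreier 1) : θ * ∑ i ∈ F, |x i| ≤ tnorm θ (Schreier 1) x := by
  refine le_trans ?_ (mul_sum_tnorm_tsProj_le hθ₀ hθ₁ x (s := F) (E := fun i => {i}) ?_ ?_)
  · gcongr with i
    simpa [tsProj_apply] using abs_le_tnorm (S := Schreier 1) hθ₀ hθ₁ (tsProj {i} x) i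
  · simp
  · simpa using mem_schreier_one.1 hF

theorem tnorm_le_tnorm_of_abs_apply_perm_eq (hθ₀ : 0 ≤ θ) (hθ₁ : θ ≤ 1) (π : Equiv.Perm ℕ+)
    (hπ : ∀ i : ℕ+, ⌊θ⁻¹⌋₊ < (i : ℕ) → π i = i) (h : ∀ i, |y (π i)| = |x i|) :
    tnorm θ (Schreier 1) y ≤ tnorm θ (Schreier 1) x := by
  refine tnorm_le_of_floor_inv_lt hθ₀ hθ₁ (π.forall_congr_right.1 fun i => ?_) fun hE hd => ?_
  · exact (h i).trans_le (abs_le_tnorm hθ₀ hθ₁ x i)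
  · refine le_trans ?_ (mul_sum_tnorm_le hθ₀ hθ₁ hE x)
    gcongr with l
    refine tnorm_le_tnorm_of_abs_le hθ₀ hθ₁ fun j => ?_
    rw [tsProj_apply, tsProj_apply]
    split_ifs with hj
    · rw [← h j, hπ j (hd.trans_le ((tsAdmissible_schreier_one_iff.1 hE).2.2 _ j hj))]
    · rfl

theorem sum_tnorm_tsProj_le_of_mem (hθ₀ : 0 ≤ θ) (hθ : θ ≤ 1 / 2) {d : ℕ} {E : Fin d → Finset ℕ+}
    (hE : TsAdmissible (Schreier 1) E) {l₀ : Fin d} {i : ℕ+} (hi : i ∈ E l₀) {τ : ℝ} (hτ₀ : 0 ≤ τ)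
    (hx : ∀ j, |x j| ≤ B) (hxτ : ∀ j ≠ i, |x j| ≤ τ) :
    ∑ l, tnorm θ (Schreier 1) (tsProj (E l) x) ≤ (l1Norm x + B + ((i : ℝ) - 1) * τ) / 2 := by
  have hdi : (d : ℝ) ≤ i := by
    exact_mod_cast (tsAdmissible_schreier_one_iff.1 hE).2.2 l₀ i hi
  have hsup (l : Fin d) (j : ℕ+) : |tsProj (E l) x j| ≤ if l = l₀ then B else τ := by
    split_ifs with hl
    · exact (abs_tsProj_le _ _ _).trans (hx j)
    · rw [tsProj_apply]
      split_ifs with hj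
      · refine hxτ j ?_
        rintro rfl
        exact Finset.disjoint_left.1 (pairwise_disjoint_of_tsAdmissible hE hl) hj hi
      · simpa using hτ₀
  calc ∑ l, tnorm θ (Schreier 1) (tsProj (E l) x)
      ≤ ∑ l, (l1Norm (tsProj (E l) x) + if l = l₀ then B else τ) / 2 :=
        Finset.sum_le_sum fun l _ => tnorm_le_half_l1Norm_add hθ₀ hθ (hsup l)
    _ = (∑ l, l1Norm (tsProj (E l) x) + B + (d - 1) * τ) / 2 := by
        rw [← Finset.sum_div, Finset.sum_add_distrib,
          ← Finset.add_sum_erase _ (fun l => if l = l₀ then B else τ) (Finset.mem_univ l₀),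
          Finset.sum_congr rfl fun l hl => if_neg (Finset.ne_of_mem_erase hl)]
        simp [Finset.card_erase_of_mem, Nat.cast_pred l₀.pos, add_assoc]
    _ ≤ (l1Norm x + B + (i - 1) * τ) / 2 := by
        gcongr
        exact sum_l1Norm_tsProj_le (pairwise_disjoint_of_tsAdmissible hE) x

/- A family that does not meet `i` only sees `y`; one that does consists of at most `i` sets. -/
theorem tnorm_single_add_le (hθ₀ : 0 ≤ θ) (hθ : θ ≤ 1 / 2) {i : ℕ+} {τ : ℝ} (hτ : τ ≤ 1)
    (hyi : y i = 0) (hy : ∀ j, |y j| ≤ τ) :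
    tnorm θ (Schreier 1) (Finsupp.single i 1 + y) ≤
      max 1 (θ * max (l1Norm y) ((l1Norm y + 2 + ((i : ℝ) - 1) * τ) / 2)) := by
  set x := Finsupp.single i 1 + y with hx
  have hθ₁ : θ ≤ 1 := by linarith
  have hxj {j : ℕ+} (hj : j ≠ i) : x j = y j := by simp [hx, hj]
  have hx_le (j : ℕ+) : |x j| ≤ 1 := by
    by_cases hj : j = i
    · simp [hj, hx, hyi]
    · exact hxj hj ▸ (hy j).trans hτ
  refine tnorm_le_of_admissible hθ₀ hθ₁ (fun j => le_max_of_le_left (hx_le j)) fun {d E} hE =>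
    le_max_of_le_right (mul_le_mul_of_nonneg_left ?_ hθ₀)
  by_cases hi : ∃ l, i ∈ E l
  · obtain ⟨l₀, hl₀⟩ := hi
    refine le_max_of_le_right ((sum_tnorm_tsProj_le_of_mem hθ₀ hθ hE hl₀
      ((abs_nonneg _).trans (hy i)) hx_le fun j hj => hxj hj ▸ hy j).trans ?_)
    have hx_l1 := l1Norm_add_le (Finsupp.single i 1) y
    rw [l1Norm_single, abs_one] at hx_l1
    linarith
  · push Not at hi
    have hproj (l : Fin d) : tsProj (E l) x = tsProj (E l) y := by
      ext j
      rw [tsProj_apply, tsProj_apply]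
      split_ifs with hj
      · exact hxj (by rintro rfl; exact hi l hj)
      · rfl
    refine le_max_of_le_left ?_
    simp only [hproj]
    exact (Finset.sum_le_sum fun l _ => tnorm_le_l1Norm hθ₀ hθ₁ _).trans
      (sum_l1Norm_tsProj_le (pairwise_disjoint_of_tsAdmissible hE) y)

theorem card_le_of_sum_tnorm_tsProj_ne_zero (hθ₀ : 0 ≤ θ) (hθ₁ : θ ≤ 1) {d : ℕ}
    {E : Fin d → Finset ℕ+} (hE : TsAdmissible (Schreier 1) E) {L : ℕ+}
    (hx : ∀ i, L < i → x i = 0) (h : ∑ l, tnorm θ (Schreier 1) (tsProj (E l) x) ≠ 0) :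
    d ≤ (L : ℕ) := by
  obtain ⟨l, -, hl⟩ := Finset.exists_ne_zero_of_sum_ne_zero h
  obtain ⟨a, ha⟩ := Finsupp.ne_iff.1 (show tsProj (E l) x ≠ 0 from
    fun h => hl (h ▸ tnorm_zero hθ₀ hθ₁))
  rw [tsProj_apply, Finsupp.coe_zero, Pi.zero_apply, ne_eq, ite_eq_right_iff,
    Classical.not_imp] at ha
  have haL : a ≤ L := not_lt.1 fun h => ha.2 (hx a h)
  exact ((tsAdmissible_schreier_one_iff.1 hE).2.2 l a ha.1).trans (PNat.coe_le_coe _ _ |>.2 haL)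

theorem sum_erase_castSucc {M : Type*} [AddCommGroup M] {d : ℕ} (l₀ : Fin d)
    (f : Fin (d + 1) → M) :
    ∑ l ∈ Finset.univ.erase l₀.castSucc, f l =
      ∑ l ∈ Finset.univ.erase l₀, f l.castSucc + f (Fin.last d) := by
  rw [Finset.sum_erase_eq_sub (Finset.mem_univ _), Finset.sum_erase_eq_sub (Finset.mem_univ _),
    Fin.sum_univ_castSucc, add_sub_right_comm]

/- The support of `y` takes the place of the discarded set, so the family stays admissible. -/
theorem mul_sum_erase_add_tnorm_le (hθ₀ : 0 ≤ θ) (hθ₁ : θ ≤ 1) {d : ℕ} {E : Fin d → Finset ℕ+}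
    (hE : TsAdmissible (Schreier 1) E) (l₀ : Fin d) {L : ℕ+} (hdL : d ≤ (L : ℕ))
    (hx : ∀ i, L < i → x i = 0) (hy : ∀ i ≤ L, y i = 0) :
    θ * (∑ l ∈ Finset.univ.erase l₀, tnorm θ (Schreier 1) (tsProj (E l) x) +
      tnorm θ (Schreier 1) y) ≤ tnorm θ (Schreier 1) (x + y) := by
  obtain ⟨-, hlt, hd⟩ := tsAdmissible_schreier_one_iff.1 hE
  have hy_supp {a : ℕ+} (ha : a ∈ y.support) : L < a :=
    not_le.1 fun h => Finsupp.mem_support_iff.1 ha (hy a h)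
  let G : Fin (d + 1) → Finset ℕ+ := Fin.snoc (fun l => (E l).filter (· ≤ L)) y.support
  let s : Finset (Fin (d + 1)) := Finset.univ.erase l₀.castSucc
  have hG (l : Fin d) : G l.castSucc = (E l).filter (· ≤ L) := Fin.snoc_castSucc ..
  have hG_last : G (Fin.last d) = y.support := Fin.snoc_last ..
  have hs : s.card = d := by simp [s]
  refine le_trans ?_ (mul_sum_tnorm_tsProj_le hθ₀ hθ₁ (x + y) (s := s) (E := G) ?_ ?_)
  · rw [sum_erase_castSucc]
    gcongr with l
    all_goals refine tnorm_le_tnorm_of_abs_le hθ₀ hθ₁ fun i => ?_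
    · rcases le_or_gt i L with hi | hi
      · simp [hG, tsProj_apply, hi, hy i hi]
      · simp [tsProj_apply, hx i hi]
    · rw [tsProj_apply, hG_last]
      split_ifs with hi
      · simp [hx i (hy_supp hi)]
      · simp [Finsupp.notMem_support_iff.1 hi]
  · intro i _ j _ hij a ha b hb
    induction i using Fin.lastCases with
    | last => exact absurd hij (Fin.le_last j).not_gt
    | cast i =>
      rw [hG, Finset.mem_filter] at ha
      induction j using Fin.lastCases with
      | last => exact ha.2.trans_lt (hy_supp (hG_last ▸ hb))
      | cast j =>
        rw [hG, Finset.mem_filter] at hb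
        exact hlt i j (Fin.castSucc_lt_castSucc_iff.1 hij) a ha.1 b hb.1
  · intro i _ a ha
    rw [hs]
    induction i using Fin.lastCases with
    | last => exact hdL.trans (PNat.coe_le_coe _ _ |>.2 (hy_supp (hG_last ▸ ha)).le)
    | cast i =>
      rw [hG, Finset.mem_filter] at ha
      exact hd i a ha.1

/- A family norming `x` beyond its supremum norm has more than `⌊θ⁻¹⌋` sets; the one contributing
least is traded for the support of `y`. -/
theorem mul_one_sub_add_mul_tnorm_le (hθ₀ : 0 ≤ θ) (hθ₁ : θ ≤ 1) (hB : ∀ i, |x i| ≤ B)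
    (hBx : B < tnorm θ (Schreier 1) x) {L : ℕ+} (hx : ∀ i, L < i → x i = 0)
    (hy : ∀ i ≤ L, y i = 0) :
    B * (1 - 1 / (⌊θ⁻¹⌋₊ + 1 : ℝ)) + θ * tnorm θ (Schreier 1) y ≤ tnorm θ (Schreier 1) (x + y) := by
  obtain ⟨d, E, hE, hd, hlt⟩ : ∃ (d : ℕ) (E : Fin d → Finset ℕ+), TsAdmissible (Schreier 1) E ∧
      ⌊θ⁻¹⌋₊ < d ∧ B < θ * ∑ l, tnorm θ (Schreier 1) (tsProj (E l) x) := by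
    by_contra! h
    exact hBx.not_ge (tnorm_le_of_floor_inv_lt hθ₀ hθ₁ hB (h _ _))
  set V := ∑ l, tnorm θ (Schreier 1) (tsProj (E l) x) with hV
  have hB₀ : 0 ≤ B := (abs_nonneg _).trans (hB 1)
  have hd₀ : (0 : ℝ) < d := by exact_mod_cast hd.pos
  have hV₀ : V ≠ 0 := by
    intro h
    rw [h, mul_zero] at hlt
    exact hlt.not_ge hB₀
  obtain ⟨l₀, -, hl₀⟩ : ∃ l₀ ∈ Finset.univ, tnorm θ (Schreier 1) (tsProj (E l₀) x) ≤ V / d := by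
    refine Finset.exists_le_of_sum_le ⟨⟨0, hd.pos⟩, Finset.mem_univ _⟩ (le_of_eq ?_)
    simp [← hV, mul_div_cancel₀ V hd₀.ne']
  have hinv : 1 / (d : ℝ) ≤ 1 / (⌊θ⁻¹⌋₊ + 1 : ℝ) :=
    one_div_le_one_div_of_le (by positivity) (by exact_mod_cast hd)
  have hinv_le_one : 1 / (⌊θ⁻¹⌋₊ + 1 : ℝ) ≤ 1 := by
    rw [div_le_one (by positivity)]
    linarith [Nat.cast_nonneg (α := ℝ) ⌊θ⁻¹⌋₊]
  calc B * (1 - 1 / (⌊θ⁻¹⌋₊ + 1 : ℝ)) + θ * tnorm θ (Schreier 1) y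
      ≤ θ * V * (1 - 1 / d) + θ * tnorm θ (Schreier 1) y := by
        gcongr
        linarith
    _ = θ * (V - V / d + tnorm θ (Schreier 1) y) := by ring
    _ ≤ θ * (∑ l ∈ Finset.univ.erase l₀, tnorm θ (Schreier 1) (tsProj (E l) x) +
          tnorm θ (Schreier 1) y) := by
        rw [Finset.sum_erase_eq_sub (Finset.mem_univ l₀)]
        gcongr
    _ ≤ tnorm θ (Schreier 1) (x + y) := mul_sum_erase_add_tnorm_le hθ₀ hθ₁ hE l₀
        (card_le_of_sum_tnorm_tsProj_ne_zero hθ₀ hθ₁ hE hx hV₀) hx hy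

/-! ### Combinatorial selection principles -/

theorem exists_infinite_abs_sub_lt {ι κ : Type*} [Infinite ι] {a : ι → κ → ℝ} {C : ℝ}
    (ha : ∀ j k, |a j k| ≤ C) :
    ∃ α : κ → ℝ, ∀ (K : Finset κ) {δ : ℝ}, 0 < δ → {j | ∀ k ∈ K, |a j k - α k| < δ}.Infinite := by
  have hcompact : IsCompact (Set.univ.pi fun _ : κ => Set.Icc (-C) C) :=
    isCompact_univ_pi fun _ => isCompact_Icc
  obtain ⟨α, -, hα⟩ := hcompact.exists_mapClusterPt (f := Filter.cofinite) (u := a) <|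
    Filter.le_principal_iff.2 <| Filter.mem_map.2 <|
      Filter.Eventually.of_forall fun j k _ => abs_le.1 (ha j k)
  refine ⟨α, fun K δ hδ => ?_⟩
  have hnhds : ∀ᶠ v in nhds α, ∀ k ∈ K, |v k - α k| < δ :=
    set_pi_mem_nhds K.finite_toSet fun k _ => Metric.ball_mem_nhds (α k) hδ
  exact Filter.frequently_cofinite_iff_infinite.1 (hα.frequently hnhds)

theorem exists_signs_sum_eq_zero {ι : Type*} {G : Finset ι} (hG : Even G.card) :
    ∃ s : ι → ℝ, (∀ j, |s j| = 1) ∧ ∑ j ∈ G, s j = 0 := by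
  classical
  obtain ⟨m, hm⟩ := hG
  obtain ⟨H, hHG, hH⟩ := Finset.exists_subset_card_eq (s := G) (n := m) (by omega)
  refine ⟨fun j => if j ∈ H then 1 else -1, fun j => by dsimp only; split_ifs <;> simp, ?_⟩
  rw [← Finset.sum_sdiff hHG, Finset.sum_congr rfl fun j hj => if_neg (Finset.mem_sdiff.1 hj).2,
    Finset.sum_congr rfl fun j hj => if_pos hj]
  simp [Finset.card_sdiff_of_subset hHG, hm, hH]

/- Indices near a common cluster point, half of them with sign `+` and half with sign `-`. -/
theorem exists_signs_abs_sum_mul_le {ι κ : Type*} [Infinite ι] {a : ι → κ → ℝ} {C : ℝ}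
    (ha : ∀ j k, |a j k| ≤ C) (K : Finset κ) (A : Finset ι) {δ : ℝ} (hδ : 0 < δ) {n : ℕ}
    (hn : Even n) :
    ∃ (G : Finset ι) (s : ι → ℝ), G.card = n ∧ Disjoint G A ∧ (∀ j, |s j| = 1) ∧
      ∀ k ∈ K, |∑ j ∈ G, s j * a j k| ≤ n * δ := by
  obtain ⟨α, hα⟩ := exists_infinite_abs_sub_lt ha
  obtain ⟨G, hGsub, hGcard⟩ := ((hα K hδ).sdiff A.finite_toSet).exists_subset_card_eq n
  obtain ⟨s, hs, hs_sum⟩ := exists_signs_sum_eq_zero (G := G) (hGcard ▸ hn)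
  refine ⟨G, s, hGcard, Finset.disjoint_left.2 fun j hj => (hGsub hj).2, hs, fun k hk => ?_⟩
  calc |∑ j ∈ G, s j * a j k| = |∑ j ∈ G, s j * (a j k - α k)| := by
        simp [mul_sub, ← Finset.sum_mul, hs_sum]
    _ ≤ ∑ j ∈ G, |s j * (a j k - α k)| := Finset.abs_sum_le_sum_abs _ _
    _ ≤ ∑ _j ∈ G, δ := by
        refine Finset.sum_le_sum fun j hj => ?_
        rw [abs_mul, hs, one_mul]
        exact ((hGsub hj).1 k hk).le
    _ = n * δ := by simp [hGcard]

theorem eq_of_injective_of_le_max {α : Type*} [LinearOrder α] [LocallyFiniteOrderBot α]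
    {p : α → α} {n : α} (hp : p.Injective) (h : ∀ i, p i ≤ max i n) {i : α} (hi : n < i) :
    p i = i := by
  have hmaps : Set.MapsTo p (Finset.Iio i : Set α) (Finset.Iio i : Set α) := fun j hj => by
    rw [Finset.coe_Iio] at *
    exact (h j).trans_lt (max_lt hj hi)
  refine ((h i).trans_eq (max_eq_left hi.le)).eq_of_not_lt fun hlt => ?_
  obtain ⟨j, hj, hji⟩ := Finset.surjOn_of_injOn_of_card_le p hmaps hp.injOn le_rfl
    (Finset.mem_coe.2 (Finset.mem_Iio.2 hlt))
  exact (Finset.mem_Iio.1 (Finset.mem_coe.1 hj)).ne (hp hji)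

theorem surjective_of_injective_of_le_max {α : Type*} [LinearOrder α] [LocallyFiniteOrderBot α]
    {p : α → α} {n : α} (hp : p.Injective) (h : ∀ i, p i ≤ max i n) : p.Surjective := by
  have hmaps : Set.MapsTo p (Finset.Iic n : Set α) (Finset.Iic n : Set α) := fun j hj => by
    rw [Finset.coe_Iic] at *
    exact (h j).trans_eq (max_eq_right hj)
  intro k
  rcases lt_or_ge n k with hk | hk
  · exact ⟨k, eq_of_injective_of_le_max hp h hk⟩
  · obtain ⟨j, -, hj⟩ := Finset.surjOn_of_injOn_of_card_le p hmaps hp.injOn le_rfl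
      (Finset.mem_coe.2 (Finset.mem_Iic.2 hk))
    exact ⟨j, hj⟩

theorem one_lt_mul_floor_inv_add_one (hθ : 0 < θ) : 1 < θ * (⌊θ⁻¹⌋₊ + 1) := by
  calc 1 = θ * θ⁻¹ := (mul_inv_cancel₀ hθ.ne').symm
    _ < θ * (⌊θ⁻¹⌋₊ + 1) := by
        gcongr
        exact Nat.lt_floor_add_one _

/-! ### Bases with the Tsirelson norm -/

/-- `e` is a basis of the normed space `X` on whose finite linear combinations the norm is that of
`T[θ, S]`. The space need not be complete, so the unit vectors of `c₀₀` are an example. -/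
structure IsTsirelsonBasis (θ : ℝ) (S : Set (Finset ℕ+)) {X : Type*} [NormedAddCommGroup X]
    [NormedSpace ℝ X] (e : ℕ+ → X) : Prop where
  norm_linearCombination (z : ℕ+ →₀ ℝ) : ‖Finsupp.linearCombination ℝ e z‖ = tnorm θ S z
  exists_hasSum (x : X) : ∃ a : ℕ+ → ℝ, HasSum (fun i => a i • e i) x

theorem hasSum_linearCombination {ι κ M : Type*} [AddCommMonoid M] [Module ℝ M]
    [TopologicalSpace M] [ContinuousAdd M] [ContinuousConstSMul ℝ M] {a : ι → κ → ℝ} {e : κ → M}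
    {f : ι → M} (ha : ∀ i, HasSum (fun k => a i k • e k) (f i)) (z : ι →₀ ℝ) :
    HasSum (fun k => Finsupp.linearCombination ℝ a z k • e k)
      (Finsupp.linearCombination ℝ f z) := by
  simpa only [Finsupp.linearCombination_apply, Finsupp.sum, Finset.sum_apply, Pi.smul_apply,
    smul_eq_mul, Finset.sum_smul, mul_smul] using hasSum_sum fun i _ => (ha i).const_smul (z i)

variable {X : Type*} [NormedAddCommGroup X] [NormedSpace ℝ X] {e : ℕ+ → X}

namespace IsTsirelsonBasis

theorem of_isTsirelsonSpace {n : ℕ} (hX : IsTsirelsonSpace θ n X e) :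
    IsTsirelsonBasis θ (Schreier n) e :=
  ⟨hX.norm_embed, fun x => (hX.expansion x).exists⟩

theorem norm_sum_smul (he : IsTsirelsonBasis θ S e) (F : Finset ℕ+) (a : ℕ+ → ℝ) :
    ‖∑ i ∈ F, a i • e i‖ = tnorm θ S (truncate F a) := by
  rw [← linearCombination_truncate, he.norm_linearCombination]

theorem norm_basis (he : IsTsirelsonBasis θ S e) (hθ₀ : 0 ≤ θ) (hθ₁ : θ ≤ 1) (i : ℕ+) :
    ‖e i‖ = 1 := by
  simpa [tnorm_single_one hθ₀ hθ₁] using he.norm_linearCombination (Finsupp.single i 1)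

theorem tnorm_truncate_le_norm (he : IsTsirelsonBasis θ S e) (hθ₀ : 0 ≤ θ) (hθ₁ : θ ≤ 1)
    {a : ℕ+ → ℝ} {x : X} (hx : HasSum (fun i => a i • e i) x) (F : Finset ℕ+) :
    tnorm θ S (truncate F a) ≤ ‖x‖ := by
  refine ge_of_tendsto hx.norm ((Filter.eventually_ge_atTop F).mono fun F' hF => ?_)
  rw [he.norm_sum_smul]
  refine tnorm_le_tnorm_of_abs_le hθ₀ hθ₁ fun i => ?_
  by_cases hi : i ∈ F
  · simp [truncate_apply, hi, hF hi]
  · simp [truncate_apply, hi]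

theorem abs_coord_le_norm (he : IsTsirelsonBasis θ S e) (hθ₀ : 0 ≤ θ) (hθ₁ : θ ≤ 1)
    {a : ℕ+ → ℝ} {x : X} (hx : HasSum (fun i => a i • e i) x) (k : ℕ+) : |a k| ≤ ‖x‖ := by
  refine le_trans ?_ (he.tnorm_truncate_le_norm hθ₀ hθ₁ hx {k})
  simpa [truncate_apply] using abs_le_tnorm (S := S) hθ₀ hθ₁ (truncate {k} a) k

theorem mul_sum_abs_coord_le_norm (he : IsTsirelsonBasis θ (Schreier 1) e) (hθ₀ : 0 ≤ θ)
    (hθ₁ : θ ≤ 1) {a : ℕ+ → ℝ} {x : X} (hx : HasSum (fun i => a i • e i) x) {F : Finset ℕ+}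
    (hF : F ∈ Schreier 1) : θ * ∑ k ∈ F, |a k| ≤ ‖x‖ := by
  refine le_trans (le_of_eq ?_) ((mul_sum_abs_le_tnorm hθ₀ hθ₁ (truncate F a) hF).trans
    (he.tnorm_truncate_le_norm hθ₀ hθ₁ hx F))
  congr 1
  exact Finset.sum_congr rfl fun k hk => by rw [truncate_apply, if_pos hk]

theorem exists_forall_abs_coord_le (he : IsTsirelsonBasis θ S e) (hθ₀ : 0 ≤ θ) (hθ₁ : θ ≤ 1)
    {a : ℕ+ → ℝ} {x : X} (hx : HasSum (fun i => a i • e i) x) : ∃ k, ∀ j, |a j| ≤ |a k| := by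
  have hzero : Filter.Tendsto (fun i => |a i|) Filter.cofinite (nhds 0) := by
    simpa [norm_smul, he.norm_basis hθ₀ hθ₁] using hx.summable.tendsto_cofinite_zero.norm
  by_cases h : ∃ k, a k ≠ 0
  · obtain ⟨k, hk⟩ := h
    refine continuous_of_discreteTopology.exists_forall_ge' k ?_
    rw [Filter.cocompact_eq_cofinite]
    exact (hzero.eventually (gt_mem_nhds (abs_pos.2 hk))).mono fun _ => le_of_lt
  · push Not at h
    exact ⟨1, fun j => by simp [h]⟩

theorem mul_one_sub_add_mul_norm_le (he : IsTsirelsonBasis θ (Schreier 1) e) (hθ₀ : 0 ≤ θ)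
    (hθ₁ : θ ≤ 1) {a w : ℕ+ → ℝ} {y : X} (hy : HasSum (fun k => w k • e k) y) {L : ℕ+}
    (ha : ∀ k, |a k| ≤ B) (hBa : B < ‖∑ k ∈ Finset.Iic L, a k • e k‖) :
    B * (1 - 1 / (⌊θ⁻¹⌋₊ + 1 : ℝ)) + θ * ‖y - ∑ k ∈ Finset.Iic L, w k • e k‖ ≤
      ‖∑ k ∈ Finset.Iic L, a k • e k + (y - ∑ k ∈ Finset.Iic L, w k • e k)‖ := by
  have htail := hy.sub_const (∑ k ∈ Finset.Iic L, w k • e k)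
  refine le_of_tendsto_of_tendsto ((htail.norm.const_mul θ).const_add _) (htail.const_add _).norm
    ((Filter.eventually_ge_atTop (Finset.Iic L)).mono fun F hF => ?_)
  have hsub : ∑ k ∈ F, w k • e k - ∑ k ∈ Finset.Iic L, w k • e k =
      Finsupp.linearCombination ℝ e (truncate (F \ Finset.Iic L) w) := by
    rw [linearCombination_truncate, ← Finset.sum_sdiff hF, add_sub_cancel_right]
  rw [he.norm_sum_smul] at hBa
  simp only [hsub]
  rw [← linearCombination_truncate, ← map_add, he.norm_linearCombination,
    he.norm_linearCombination]
  have hB₀ : 0 ≤ B := (abs_nonneg _).trans (ha 1)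
  refine mul_one_sub_add_mul_tnorm_le hθ₀ hθ₁ (fun k => ?_) hBa (L := L) (fun k hk => ?_)
    fun k hk => ?_
  · rw [truncate_apply]
    split_ifs <;> simp [ha, hB₀]
  · simp [truncate_apply, hk]
  · simp [truncate_apply, hk]

end IsTsirelsonBasis

/-! ### Spread vectors -/

/-- The vector with coordinates `± (θ |G|)⁻¹` on `G`, the signs being given by `s`. It is normalized
so that `θ` times its `ℓ₁` norm is `1`. -/
def spreadVector (θ : ℝ) (G : Finset ℕ+) (s : ℕ+ → ℝ) : ℕ+ →₀ ℝ :=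
  truncate G fun j => (θ * G.card)⁻¹ * s j

section SpreadVector

variable {G : Finset ℕ+} {s : ℕ+ → ℝ}

theorem support_spreadVector_subset : (spreadVector θ G s).support ⊆ G :=
  support_truncate_subset G _

theorem abs_spreadVector_apply (hθ₀ : 0 ≤ θ) (hs : ∀ j, |s j| = 1) (j : ℕ+) :
    |spreadVector θ G s j| = if j ∈ G then (θ * G.card)⁻¹ else 0 := by
  rw [spreadVector, truncate_apply]
  split_ifs
  · rw [abs_mul, hs, mul_one, abs_of_nonneg (by positivity)]
  · exact abs_zero

theorem mul_l1Norm_spreadVector (hθ₀ : 0 < θ) (hG : G.Nonempty) (hs : ∀ j, |s j| = 1) :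
    θ * l1Norm (spreadVector θ G s) = 1 := by
  have hcard : (G.card : ℝ) ≠ 0 := by exact_mod_cast hG.card_ne_zero
  rw [l1Norm_eq_sum support_spreadVector_subset]
  simp only [abs_spreadVector_apply hθ₀.le hs, Finset.sum_ite_mem, Finset.inter_self,
    Finset.sum_const, nsmul_eq_mul]
  field_simp

theorem one_le_tnorm_spreadVector (hθ₀ : 0 < θ) (hθ₁ : θ ≤ 1) (hG : G.Nonempty)
    (hGS : G ∈ Schreier 1) (hs : ∀ j, |s j| = 1) :
    1 ≤ tnorm θ (Schreier 1) (spreadVector θ G s) := by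
  rw [← mul_l1Norm_spreadVector hθ₀ hG hs, l1Norm_eq_sum support_spreadVector_subset]
  exact mul_sum_abs_le_tnorm hθ₀.le hθ₁ _ hGS

theorem tnorm_single_add_spreadVector_le (hθ₀ : 0 < θ) (hθ : θ ≤ 1 / 2) (hG : θ⁻¹ ≤ G.card)
    (hs : ∀ j, |s j| = 1) {i : ℕ+} (hi : i ∉ G) :
    tnorm θ (Schreier 1) (Finsupp.single i 1 + spreadVector θ G s) ≤ 1 + i / G.card := by
  have hcard : (0 : ℝ) < G.card := (inv_pos.2 hθ₀).trans_le hG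
  have hl1 := mul_l1Norm_spreadVector hθ₀ (Finset.card_pos.1 (by exact_mod_cast hcard)) hs
  have hτ : (θ * G.card)⁻¹ ≤ 1 := inv_le_one_of_one_le₀ <| by
    rwa [← inv_le_iff_one_le_mul₀' hθ₀]
  have hquot : 0 ≤ (i : ℝ) / G.card := by positivity
  refine (tnorm_single_add_le hθ₀.le hθ hτ ?_ fun j => ?_).trans
    (max_le (by linarith) ?_)
  · simp [spreadVector, truncate_apply, hi]
  · rw [abs_spreadVector_apply hθ₀.le hs]
    split_ifs
    · rfl
    · positivity
  · rw [mul_max_of_nonneg _ _ hθ₀.le, hl1]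
    refine max_le (by linarith) ?_
    calc θ * ((l1Norm (spreadVector θ G s) + 2 + ((i : ℝ) - 1) * (θ * G.card)⁻¹) / 2)
        = (θ * l1Norm (spreadVector θ G s) + 2 * θ + (i / G.card - 1 / G.card)) / 2 := by
          field_simp
      _ ≤ 1 + i / G.card := by
          have : 0 < 1 / (G.card : ℝ) := by positivity
          rw [hl1]
          linarith

theorem linearCombination_spreadVector_apply {κ : Type*} (a : ℕ+ → κ → ℝ) (k : κ) :
    Finsupp.linearCombination ℝ a (spreadVector θ G s) k =
      (θ * G.card)⁻¹ * ∑ j ∈ G, s j * a j k := by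
  simp [spreadVector, linearCombination_truncate, Finset.mul_sum, mul_assoc]

end SpreadVector

/- Spread over many coordinates beyond `i`, the vector hardly adds to the norm of `e_i`; its signs
are balanced so that the matrix nearly annihilates it on `K`. -/
theorem exists_spread_vector {κ : Type*} {a : ℕ+ → κ → ℝ} (hθ₀ : 0 < θ) (hθ : θ ≤ 1 / 2)
    (ha : ∀ i k, |a i k| ≤ B) (i : ℕ+) (K : Finset κ) {η : ℝ} (hη : 0 < η) :
    ∃ z : ℕ+ →₀ ℝ, 1 ≤ tnorm θ (Schreier 1) z ∧
      tnorm θ (Schreier 1) (Finsupp.single i 1 + z) ≤ 1 + η ∧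
      ∀ k ∈ K, |Finsupp.linearCombination ℝ a z k| ≤ η := by
  obtain ⟨m, hm⟩ := exists_nat_gt (max θ⁻¹ (i / η))
  obtain ⟨hmθ, hmi⟩ := max_lt_iff.1 hm
  have hm₀ : (0 : ℝ) < m := (inv_pos.2 hθ₀).trans hmθ
  let n : ℕ+ := ⟨2 * m, by exact_mod_cast mul_pos two_pos hm₀⟩
  obtain ⟨G, s, hGcard, hGA, hs, hsum⟩ := exists_signs_abs_sum_mul_le ha K
    (Finset.Iic (max i n)) (mul_pos hη hθ₀) (even_two_mul m)
  have hmax {j : ℕ+} (hj : j ∈ G) : max i n < j :=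
    not_le.1 fun h => Finset.disjoint_left.1 hGA hj (Finset.mem_Iic.2 h)
  have hGm : (m : ℝ) ≤ G.card := by exact_mod_cast (by omega : m ≤ G.card)
  have hG₀ : (0 : ℝ) < G.card := hm₀.trans_le hGm
  refine ⟨spreadVector θ G s, one_le_tnorm_spreadVector hθ₀ (by linarith)
    (Finset.card_pos.1 (by exact_mod_cast hG₀)) (mem_schreier_one.2 fun j hj => ?_) hs, ?_,
    fun k hk => ?_⟩
  · rw [hGcard]
    exact PNat.coe_le_coe n j |>.2 ((le_max_right i n).trans (hmax hj).le)
  · refine (tnorm_single_add_spreadVector_le hθ₀ hθ (hmθ.le.trans hGm) hs fun hi =>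
      (le_max_left i n).not_gt (hmax hi)).trans ?_
    gcongr
    exact (div_le_comm₀ hG₀ hη).2 (hmi.le.trans hGm)
  · rw [linearCombination_spreadVector_apply, abs_mul, abs_of_pos (by positivity)]
    calc (θ * G.card)⁻¹ * |∑ j ∈ G, s j * a j k| ≤ (θ * G.card)⁻¹ * (G.card * (η * θ)) := by
          gcongr
          exact hGcard ▸ hsum k hk
      _ = η := by field_simp

/-! ### Isometries -/

section Isometry

variable {U : X →ₗᵢ[ℝ] X} {a : ℕ+ → ℕ+ → ℝ}

theorem hasSum_map_linearCombination (ha : ∀ i, HasSum (fun k => a i k • e k) (U (e i)))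
    (z : ℕ+ →₀ ℝ) :
    HasSum (fun k => Finsupp.linearCombination ℝ a z k • e k)
      (U (Finsupp.linearCombination ℝ e z)) := by
  have hU : U (Finsupp.linearCombination ℝ e z) = Finsupp.linearCombination ℝ (U ∘ e) z :=
    Finsupp.apply_linearCombination ℝ U.toLinearMap e z
  exact hU ▸ hasSum_linearCombination ha z

theorem abs_linearCombination_le_tnorm (he : IsTsirelsonBasis θ S e) (hθ₀ : 0 ≤ θ) (hθ₁ : θ ≤ 1)
    (ha : ∀ i, HasSum (fun k => a i k • e k) (U (e i))) (z : ℕ+ →₀ ℝ) (k : ℕ+) :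
    |Finsupp.linearCombination ℝ a z k| ≤ tnorm θ S z := by
  rw [← he.norm_linearCombination, ← U.norm_map]
  exact he.abs_coord_le_norm hθ₀ hθ₁ (hasSum_map_linearCombination ha z) k

theorem abs_coeff_le_one (he : IsTsirelsonBasis θ S e) (hθ₀ : 0 ≤ θ) (hθ₁ : θ ≤ 1)
    (ha : ∀ i, HasSum (fun k => a i k • e k) (U (e i))) (i k : ℕ+) : |a i k| ≤ 1 := by
  simpa [tnorm_single_one hθ₀ hθ₁] using
    abs_linearCombination_le_tnorm he hθ₀ hθ₁ ha (Finsupp.single i 1) k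

theorem coeff_eq_zero (he : IsTsirelsonBasis θ S e) (hθ₀ : 0 ≤ θ) (hθ : θ ≤ 1 / 2)
    (ha : ∀ i, HasSum (fun k => a i k • e k) (U (e i))) {i j k : ℕ+} (hij : i ≠ j)
    (hik : |a i k| = 1) : a j k = 0 := by
  have hle {c : ℝ} (hc : |c| ≤ 1) : |a i k + c * a j k| ≤ 1 := by
    simpa using (abs_linearCombination_le_tnorm he hθ₀ (by linarith) ha
      (Finsupp.single i 1 + Finsupp.single j c) k).trans
        (tnorm_single_add_single_le_one hθ₀ hθ hij hc)
  have hadd := abs_le.1 (hle (c := 1) (by simp))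
  have hsub := abs_le.1 (hle (c := -1) (by simp))
  rcases eq_or_eq_neg_of_abs_eq hik with h | h <;> rw [h] at hadd hsub <;> linarith

theorem abs_linearCombination_apply_eq (he : IsTsirelsonBasis θ S e) (hθ₀ : 0 ≤ θ) (hθ : θ ≤ 1 / 2)
    (ha : ∀ i, HasSum (fun k => a i k • e k) (U (e i))) {i k : ℕ+} (hik : |a i k| = 1)
    (z : ℕ+ →₀ ℝ) : |Finsupp.linearCombination ℝ a z k| = |z i| := by
  rw [Finsupp.linearCombination_apply, Finsupp.sum, Finset.sum_apply,
    Finset.sum_eq_single i (fun j _ hji => by simp [coeff_eq_zero he hθ₀ hθ ha hji.symm hik])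
      (fun hi => by simp [Finsupp.notMem_support_iff.1 hi]),
    Pi.smul_apply, smul_eq_mul, abs_mul, hik, mul_one]

theorem exists_hasSum_norm_add_le (he : IsTsirelsonBasis θ (Schreier 1) e) (hθ₀ : 0 < θ)
    (hθ : θ ≤ 1 / 2) (ha : ∀ i, HasSum (fun k => a i k • e k) (U (e i))) (i : ℕ+) (K : Finset ℕ+)
    {η : ℝ} (hη : 0 < η) :
    ∃ (w : ℕ+ → ℝ) (y : X), HasSum (fun k => w k • e k) y ∧ 1 ≤ ‖y‖ ∧ ‖U (e i) + y‖ ≤ 1 + η ∧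
      ‖∑ k ∈ K, w k • e k‖ ≤ η := by
  have hθ₁ : θ ≤ 1 := by linarith
  set δ := η / (K.card + 1) with hδ
  have hδ₀ : 0 < δ := by positivity
  have hδη : K.card * δ + δ = η := by
    rw [hδ]
    field_simp
  have hKδ : 0 ≤ K.card * δ := by positivity
  obtain ⟨z, hz, hiz, hz_small⟩ :=
    exists_spread_vector hθ₀ hθ (abs_coeff_le_one he hθ₀.le hθ₁ ha) i K hδ₀
  refine ⟨_, _, hasSum_map_linearCombination ha z, ?_, ?_, ?_⟩
  · rwa [U.norm_map, he.norm_linearCombination]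
  · calc ‖U (e i) + U (Finsupp.linearCombination ℝ e z)‖
        = tnorm θ (Schreier 1) (Finsupp.single i 1 + z) := by
          rw [← map_add, U.norm_map, ← he.norm_linearCombination, map_add,
            Finsupp.linearCombination_single, one_smul]
      _ ≤ 1 + η := by linarith
  · calc ‖∑ k ∈ K, Finsupp.linearCombination ℝ a z k • e k‖ ≤ ∑ _k ∈ K, δ :=
          norm_sum_le_of_le _ fun k hk => by
            rw [norm_smul, he.norm_basis hθ₀.le hθ₁, mul_one]
            exact hz_small k hk
      _ ≤ η := by
          rw [Finset.sum_const, nsmul_eq_mul]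
          linarith

/- Otherwise a spread vector `z` has `‖e_i + z‖ ≈ 1`, whereas the tail of `U z` adds `θ` to the
norm of `U e_i`, up to a loss of `1 / (⌊θ⁻¹⌋ + 1) < θ`. -/
theorem exists_abs_coeff_eq_one (he : IsTsirelsonBasis θ (Schreier 1) e) (hθ₀ : 0 < θ)
    (hθ : θ ≤ 1 / 2) (ha : ∀ i, HasSum (fun k => a i k • e k) (U (e i))) (i : ℕ+) :
    ∃ k, |a i k| = 1 := by
  have hθ₁ : θ ≤ 1 := by linarith
  obtain ⟨k, hk⟩ := he.exists_forall_abs_coord_le hθ₀.le hθ₁ (ha i)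
  refine ⟨k, (abs_coeff_le_one he hθ₀.le hθ₁ ha i k).eq_of_not_lt fun hlt => ?_⟩
  set ν : ℝ := 1 / (⌊θ⁻¹⌋₊ + 1)
  have hνθ : ν < θ := (div_lt_iff₀ (by positivity)).2 (one_lt_mul_floor_inv_add_one hθ₀)
  have hν₀ : 0 ≤ ν := by positivity
  obtain ⟨η, hη₀, hη⟩ : ∃ η, 0 < η ∧ η < min (1 - |a i k|) ((θ - ν) / 5) :=
    exists_between (lt_min (by linarith) (by linarith))
  obtain ⟨hηa, hηθ⟩ := lt_min_iff.1 hη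
  obtain ⟨L, hL⟩ := (((ha i).comp Filter.tendsto_finset_Iic_atTop_atTop).eventually
    (Metric.ball_mem_nhds _ hη₀)).exists
  obtain ⟨w, y, hy, hy_norm, hUy, hv⟩ :=
    exists_hasSum_norm_add_le he hθ₀ hθ ha i (Finset.Iic L) hη₀
  set u := ∑ k ∈ Finset.Iic L, a i k • e k
  set v := ∑ k ∈ Finset.Iic L, w k • e k
  have hu : ‖u - U (e i)‖ < η := mem_ball_iff_norm.1 hL
  have hu_norm : 1 - η < ‖u‖ := by
    have h := norm_sub_norm_le (U (e i)) u
    rw [norm_sub_rev, U.norm_map, he.norm_basis hθ₀.le hθ₁] at h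
    linarith
  have hlower := he.mul_one_sub_add_mul_norm_le hθ₀.le hθ₁ hy
    (fun j => (hk j).trans (by linarith : |a i k| ≤ 1 - η)) hu_norm
  have hupper : ‖u + (y - v)‖ ≤ 1 + 3 * η := by
    calc ‖u + (y - v)‖ = ‖(U (e i) + y) + (u - U (e i)) - v‖ := by congr 1; abel
      _ ≤ ‖U (e i) + y‖ + ‖u - U (e i)‖ + ‖v‖ :=
        (norm_sub_le _ _).trans (add_le_add_left (norm_add_le _ _) _)
      _ ≤ 1 + 3 * η := by linarith
  have hyv : θ * (1 - η) ≤ θ * ‖y - v‖ := by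
    gcongr
    linarith [norm_sub_norm_le y v]
  nlinarith

theorem tnorm_truncate_one_lt (hθ₀ : 0 < θ) (hθ : θ ≤ 1 / 2) {i : ℕ+} {H : Finset ℕ+} (hi : i ∈ H)
    (hiH : (i : ℕ) < H.card) (hH : ⌊θ⁻¹⌋₊ < H.card) :
    tnorm θ (Schreier 1) (truncate H 1) < θ * H.card := by
  have hsplit : truncate H 1 = Finsupp.single i 1 + truncate (H.erase i) 1 := by
    ext j
    by_cases hj : j = i
    · simp [truncate_apply, hj, hi]
    · simp [truncate_apply, hj]
  have hl1 : l1Norm (truncate (H.erase i) 1) = H.card - 1 := by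
    rw [← Finset.cast_card_erase_of_mem hi]
    simp [l1Norm_truncate]
  have hiH' : (i : ℝ) + 1 ≤ H.card := by exact_mod_cast hiH
  rw [hsplit]
  refine (tnorm_single_add_le hθ₀.le hθ le_rfl (by simp [truncate_apply]) fun j => ?_).trans_lt
    (max_lt ?_ ?_)
  · rw [truncate_apply]
    split_ifs <;> simp
  · refine (one_lt_mul_floor_inv_add_one hθ₀).trans_le ?_
    gcongr
    exact_mod_cast hH
  · rw [hl1]
    gcongr
    exact max_lt (by linarith) (by linarith)

theorem mul_card_le_tnorm_truncate_one (he : IsTsirelsonBasis θ (Schreier 1) e) (hθ₀ : 0 ≤ θ)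
    (hθ : θ ≤ 1 / 2) (ha : ∀ i, HasSum (fun k => a i k • e k) (U (e i))) {p : ℕ+ → ℕ+}
    (hp : ∀ i, |a i (p i)| = 1) (hp_inj : p.Injective) {H : Finset ℕ+}
    (hH : H.image p ∈ Schreier 1) : θ * H.card ≤ tnorm θ (Schreier 1) (truncate H 1) := by
  have hcoeff : ∀ j ∈ H, |Finsupp.linearCombination ℝ a (truncate H 1) (p j)| = 1 := fun j hj => by
    rw [abs_linearCombination_apply_eq he hθ₀ hθ ha (hp j), truncate_apply, if_pos hj,
      Pi.one_apply, abs_one]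
  have hlower := he.mul_sum_abs_coord_le_norm hθ₀ (by linarith)
    (hasSum_map_linearCombination ha (truncate H 1)) hH
  rw [U.norm_map, he.norm_linearCombination, Finset.sum_image hp_inj.injOn,
    Finset.sum_congr rfl hcoeff] at hlower
  simpa using hlower

/- With `M = max i ⌊θ⁻¹⌋`, the sum of `e_i` and `M` further unit vectors has norm less than
`θ (M + 1)`, but if `p i` were beyond `M`, its image could have `M + 1` peaks there. -/
theorem coe_peak_le_max (he : IsTsirelsonBasis θ (Schreier 1) e) (hθ₀ : 0 < θ)
    (hθ : θ ≤ 1 / 2) (ha : ∀ i, HasSum (fun k => a i k • e k) (U (e i))) {p : ℕ+ → ℕ+}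
    (hp : ∀ i, |a i (p i)| = 1) (hp_inj : p.Injective) (i : ℕ+) :
    (p i : ℕ) ≤ max (i : ℕ) ⌊θ⁻¹⌋₊ := by
  set M := max (i : ℕ) ⌊θ⁻¹⌋₊
  by_contra! hlt
  have hfin : ({j | (p j : ℕ) ≤ M} ∪ {i}).Finite :=
    ((Set.finite_Iic M).preimage (PNat.coe_injective.comp hp_inj).injOn).union
      (Set.finite_singleton i)
  obtain ⟨G, hG, hGcard⟩ := hfin.infinite_compl.exists_subset_card_eq M
  have hcard : (insert i G).card = M + 1 := by
    rw [Finset.card_insert_of_notMem fun hi => hG hi (Or.inr rfl), hGcard]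
  have hschreier : (insert i G).image p ∈ Schreier 1 := by
    rw [mem_schreier_one, Finset.card_image_of_injective _ hp_inj, hcard]
    refine Finset.forall_mem_image.2 fun j hj => ?_
    rcases Finset.mem_insert.1 hj with rfl | hj
    · exact hlt
    · exact not_le.1 fun h : (p j : ℕ) ≤ M => hG hj (Or.inl h)
  refine (mul_card_le_tnorm_truncate_one he hθ₀.le hθ ha hp hp_inj hschreier).not_gt
    (tnorm_truncate_one_lt hθ₀ hθ (Finset.mem_insert_self i G) ?_ ?_)
  · exact hcard ▸ Nat.lt_succ_of_le (le_max_left _ _)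
  · exact hcard ▸ Nat.lt_succ_of_le (le_max_right _ _)

theorem exists_signs_perm (he : IsTsirelsonBasis θ (Schreier 1) e) (hθ₀ : 0 < θ) (hθ : θ ≤ 1 / 2)
    (U : X →ₗᵢ[ℝ] X) :
    ∃ (ε : ℕ+ → ℝ) (π : Equiv.Perm ℕ+), (∀ i, ε i = 1 ∨ ε i = -1) ∧
      (∀ i : ℕ+, ⌊θ⁻¹⌋₊ < (i : ℕ) → π i = i) ∧ ∀ i, U (e i) = ε i • e (π i) := by
  choose a ha using fun i => he.exists_hasSum (U (e i))
  choose p hp using exists_abs_coeff_eq_one he hθ₀ hθ ha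
  have hp_inj : p.Injective := fun i j hij => by
    by_contra hne
    have hj := hp j
    rw [← hij, coeff_eq_zero he hθ₀.le hθ ha hne (hp i), abs_zero] at hj
    exact zero_ne_one hj
  have hfloor : 0 < ⌊θ⁻¹⌋₊ := Nat.floor_pos.2 ((one_le_inv₀ hθ₀).2 (by linarith))
  let n : ℕ+ := ⟨⌊θ⁻¹⌋₊, hfloor⟩
  have hp_le (i : ℕ+) : p i ≤ max i n :=
    le_max_iff.2 ((le_max_iff.1 (coe_peak_le_max he hθ₀ hθ ha hp hp_inj i)).imp
      (PNat.coe_le_coe _ i).1 (PNat.coe_le_coe _ n).1)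
  have hp_surj := surjective_of_injective_of_le_max hp_inj hp_le
  refine ⟨fun i => a i (p i), Equiv.ofBijective p ⟨hp_inj, hp_surj⟩,
    fun i => eq_or_eq_neg_of_abs_eq (hp i), fun i hi => eq_of_injective_of_le_max hp_inj hp_le hi,
    fun i => (ha i).unique (hasSum_single (p i) fun k hk => ?_)⟩
  obtain ⟨j, rfl⟩ := hp_surj k
  rw [coeff_eq_zero he hθ₀.le hθ ha (ne_of_apply_ne p hk) (hp j), zero_smul]

end Isometry

theorem norm_map_eq_of_signs_perm (he : IsTsirelsonBasis θ (Schreier 1) e) (hθ₀ : 0 ≤ θ)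
    (hθ₁ : θ ≤ 1) {U : X →L[ℝ] X} {ε : ℕ+ → ℝ} {π : Equiv.Perm ℕ+}
    (hε : ∀ i, ε i = 1 ∨ ε i = -1) (hπ : ∀ i : ℕ+, ⌊θ⁻¹⌋₊ < (i : ℕ) → π i = i)
    (hU : ∀ i, U (e i) = ε i • e (π i)) (x : X) : ‖U x‖ = ‖x‖ := by
  obtain ⟨a, ha⟩ := he.exists_hasSum x
  refine tendsto_nhds_unique (U.hasSum ha).norm (ha.norm.congr fun F => ?_)
  set b : ℕ+ → ℝ := fun k => ε (π.symm k) * a (π.symm k) with hb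
  have hmap : ∑ i ∈ F, U (a i • e i) = ∑ k ∈ F.map π.toEmbedding, b k • e k := by
    simp [hb, hU, smul_smul, mul_comm]
  have habs (i : ℕ+) : |truncate (F.map π.toEmbedding) b (π i)| = |truncate F a i| := by
    rcases hε i with h | h <;> by_cases hi : i ∈ F <;> simp [truncate_apply, hb, h, hi]
  have hnorm : tnorm θ (Schreier 1) (truncate (F.map π.toEmbedding) b) =
      tnorm θ (Schreier 1) (truncate F a) :=
    le_antisymm (tnorm_le_tnorm_of_abs_apply_perm_eq hθ₀ hθ₁ π hπ habs)
      (tnorm_le_tnorm_of_abs_apply_perm_eq hθ₀ hθ₁ π.symm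
        (fun i hi => π.symm_apply_eq.2 (hπ i hi).symm) fun i => by rw [← habs, π.apply_symm_apply])
  rw [hmap, he.norm_sum_smul, he.norm_sum_smul, hnorm]

end Tsirelson

theorem tsirelson_linearIsometry_iff_general {θ : ℝ} (hθ₀ : 0 < θ) (hθ : θ ≤ 1 / 2)
    {X : Type*} [NormedAddCommGroup X] [NormedSpace ℝ X] {e : ℕ+ → X}
    (he : Tsirelson.IsTsirelsonBasis θ (Schreier 1) e) (U : X →L[ℝ] X) :
    (∀ x : X, ‖U x‖ = ‖x‖) ↔
      ∃ (ε : ℕ+ → ℝ) (π : Equiv.Perm ℕ+),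
        (∀ i, ε i = 1 ∨ ε i = -1) ∧
        (∀ i : ℕ+, ⌊θ⁻¹⌋₊ < (i : ℕ) → π i = i) ∧
        (∀ i : ℕ+, U (e i) = ε i • e (π i)) := by
  constructor
  · intro hU
    exact Tsirelson.exists_signs_perm he hθ₀ hθ ⟨U.toLinearMap, hU⟩
  · rintro ⟨ε, π, hε, hπ, hUe⟩
    exact Tsirelson.norm_map_eq_of_signs_perm he hθ₀.le (by linarith) hε hπ hUe

/-- A (bounded) linear map on `T[θ, S₁]` is an isometry if and only if
it maps `e_i` to `ε_i e_{π i}`, where `π` is a permutation of `{1, …, ⌊θ⁻¹⌋}`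
(fixing all larger indices). -/
theorem tsirelson_linearIsometry_iff
    (θ : ℝ) (hθ0 : 0 < θ) (hθ : θ ≤ 1 / 2)
    (X : Type*) [NormedAddCommGroup X] [NormedSpace ℝ X] (e : ℕ+ → X)
    (hX : IsTsirelsonSpace θ 1 X e) (U : X →L[ℝ] X) :
    (∀ x : X, ‖U x‖ = ‖x‖) ↔
      ∃ (ε : ℕ+ → ℝ) (π : Equiv.Perm ℕ+),
        (∀ i, ε i = 1 ∨ ε i = -1) ∧
        (∀ i : ℕ+, ⌊θ⁻¹⌋₊ < (i : ℕ) → π i = i) ∧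
        (∀ i : ℕ+, U (e i) = ε i • e (π i)) := by
  exact tsirelson_linearIsometry_iff_general hθ0 hθ (.of_isTsirelsonSpace hX) U
end
end
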